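/- Over an algebraically closed field of characteristic zero, exp(G(M_{k,ℓ})) = (k+ℓ)² and exp(G(M_n(FZ₂))) = 2n², while for every finite m ≥ 1, exp(G_m(M_{k,ℓ})) = k² + ℓ² and exp(G_m(M_n(FZ₂))) = n². In particular, exp(G(A)) need not equal the limit of exp(G_m(A)) as m → ∞. -/

import Mathlib

/-!
Each codimension is pinned to `d ^ N`, up to factors polynomial in `N`, by elementary means.

*Upper bounds.* A multilinear polynomial is determined on the envelope by its values on tensors
`h u ⊗ w`, where `h u` is a homogeneous basis element and `w` a Grassmann monomial of the same
parity. Up to a sign depending only on the parities, reordering such a product only affects the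
`h u`, so there are at most `|U| ^ N · dim A` independent conditions (`upper_inf`). With `m`
generators a nonzero product has at most `m` factors with nonconstant Grassmann part; all the others
come from even basis elements, which leaves `O(N ^ m · (dim A⁰) ^ N)` conditions (`upper_fin`).

*Lower bounds.* On matrix units, a monomial `x_{σ(1)} ⋯ x_{σ(N)}` is nonzero exactly when `σ` orders
the edges of a multigraph on the matrix indices into an Eulerian trail. Evaluations thus yield an
integer matrix `R`, indexed by permutations and multigraphs, with entries `0` and `±1`. Its rank
bounds the codimension from below, and `(tr RRᵀ)² ≤ rank R · tr (RRᵀ)²` (`gram_rank`) bounds the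
rank from below. The trace counts trails. The trace of the square counts pairs of permutations that
are both trails in two multigraphs, that is, in one multigraph on pairs of indices; since a
multigraph has at most `∏ₓ outdeg(x)!` Eulerian trails (`sum_valid_le`), this number is at most
about `(N!)²` up to polynomial factors (`sum_pairs_le`). Three forms of this argument are used.

* For `G(M_{k,ℓ})` the signs are irrelevant (`lower_signed`).
* For `G(M_n(FZ₂))` the parities of the variables are free. Averaging over them produces Gauss sums
  of quadratic forms over `ZMod 2`, whose radicals consist again of multigraphs with common Eulerian
  trails, now on the vertex set `ZMod 2` (`gauss_sq_le`, `card_radical_le`). This saves the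
  factor `2 ^ N` that turns `n²` into `2n²` (`lower_parities`).
* For `G_m` a single generator suffices: matrix units of the first block, of the second block, and
  those leading from the first to the second multiply like the units of a block triangular matrix
  algebra (`lower_incidence`). This gives `binom(N, j) · k^{2j} · ℓ^{2(N-j)}` for every `j`, and the
  binomial theorem sums these to `(k² + ℓ²) ^ N`.
-/

open scoped TensorProduct

noncomputable section

variable (F : Type*) [Field F]

/-- Grassmann (exterior) algebra on generators indexed by `ι`. -/
abbrev Grass (ι : Type*) := ExteriorAlgebra F (ι →₀ F)

/-- The parity (ℤ₂) grading of the Grassmann algebra. -/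
def grassPart (ι : Type*) (i : ZMod 2) : Submodule F (Grass F ι) :=
  CliffordAlgebra.evenOdd (0 : QuadraticForm F (ι →₀ F)) i

/-- The augmentation ideal of the Grassmann algebra: elements with zero constant term. -/
def grassStar (ι : Type*) : Submodule F (Grass F ι) :=
  LinearMap.ker (ExteriorAlgebra.algebraMapInv (M := ι →₀ F)).toLinearMap

/-- The image of `p ⊗ q` inside `A ⊗[F] B`. -/
def tensSub {A B : Type*} [Ring A] [Ring B] [Algebra F A] [Algebra F B]
    (p : Submodule F A) (q : Submodule F B) : Submodule F (A ⊗[F] B) :=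
  LinearMap.range (TensorProduct.map p.subtype q.subtype)

/-- The Grassmann envelope `A⁰ ⊗ G⁰ ⊕ A¹ ⊗ G¹` of a ℤ₂-graded algebra. -/
def grassEnv (A : Type*) [Ring A] [Algebra F A] (𝒜 : ZMod 2 → Submodule F A)
    (ι : Type*) : Submodule F (A ⊗[F] Grass F ι) :=
  tensSub F (𝒜 0) (grassPart F ι 0) ⊔ tensSub F (𝒜 1) (grassPart F ι 1)

/-- The Grassmann envelope without constant terms `(G*)⁰ ⊗ A⁰ ⊕ (G*)¹ ⊗ A¹`. -/
def grassEnvStar (A : Type*) [Ring A] [Algebra F A] (𝒜 : ZMod 2 → Submodule F A)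
    (ι : Type*) : Submodule F (A ⊗[F] Grass F ι) :=
  tensSub F (𝒜 0) (grassStar F ι ⊓ grassPart F ι 0) ⊔
    tensSub F (𝒜 1) (grassStar F ι ⊓ grassPart F ι 1)

/-- A grading on a matrix algebra induced entrywise by a grading of the coefficients. -/
def matGrade {R : Type*} [Ring R] [Algebra F R] (n : ℕ) (p : Submodule F R) :
    Submodule F (Matrix (Fin n) (Fin n) R) where
  carrier := {M | ∀ a b, M a b ∈ p}
  add_mem' := by intro x y hx hy a b; exact p.add_mem (hx a b) (hy a b)
  zero_mem' := by intro a b; exact p.zero_mem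
  smul_mem' := by intro c x hx a b; exact p.smul_mem c (hx a b)
/-- The ℤ₂-grading of `M_{k,ℓ}`: degree of the `(p,q)` entry is `0` if `p,q` lie in the
same diagonal block (of sizes `k` and `ℓ`) and `1` otherwise. -/
def mklGrade (k ℓ : ℕ) (i : ZMod 2) : Submodule F (Matrix (Fin (k + ℓ)) (Fin (k + ℓ)) F) where
  carrier := {M | ∀ p q : Fin (k + ℓ),
    (if ((p : ℕ) < k ↔ (q : ℕ) < k) then (0 : ZMod 2) else 1) ≠ i → M p q = 0}
  add_mem' := by intro x y hx hy p q h; rw [Matrix.add_apply, hx p q h, hy p q h, add_zero]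
  zero_mem' := by intro p q h; rfl
  smul_mem' := by intro c x hx p q h; rw [Matrix.smul_apply, hx p q h, smul_zero]

/-- Evaluation of multilinear polynomials `Σ_σ c(σ) x_{σ(1)}⋯x_{σ(N)}` of degree `N` on
tuples from a subspace `S` of the algebra `B`, as a linear map in the coefficients. -/
def assocEval {B : Type*} [Ring B] [Algebra F B] (S : Submodule F B) (N : ℕ) :
    (Equiv.Perm (Fin N) → F) →ₗ[F] ((Fin N → S) → B) where
  toFun c := fun x => ∑ σ : Equiv.Perm (Fin N), c σ • (List.ofFn fun i => (x (σ i) : B)).prod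
  map_add' := by
    intro c d; funext x; simp [add_smul, Finset.sum_add_distrib]
  map_smul' := by
    intro r c; funext x; simp [Finset.smul_sum, smul_smul]

/-- The `N`-th codimension `c_N(S)` of the subalgebra `S ⊆ B`: the dimension of the space
of multilinear polynomial functions of degree `N` on `S`, i.e. of `P_N/(P_N ∩ Id(S))`. -/
def cseq {B : Type*} [Ring B] [Algebra F B] (S : Submodule F B) (N : ℕ) : ℕ :=
  Module.finrank F (LinearMap.range (assocEval F S N))

/-! ### The rank of an integer matrix through its Gram matrix -/

/-- The rank of a square matrix over a field is unchanged by a field extension. -/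
lemma rank_map_field {K L I : Type*} [Field K] [Field L] [Fintype I] [DecidableEq I]
    (f : K →+* L) (M : Matrix I I K) : (M.map f).rank = M.rank := by
  classical
  obtain ⟨V, U, e, hV, hU, h⟩ := M.exists_rank_normal_form
  have h' : V.map f * M.map f * U.map f =
      (Matrix.fromBlocks 1 0 0 0 : Matrix (Fin M.rank ⊕ Fin (Fintype.card I - M.rank))
        (Fin M.rank ⊕ Fin (Fintype.card I - M.rank)) L).submatrix e e := by
    rw [← Matrix.map_mul, ← Matrix.map_mul, h, ← Matrix.submatrix_map, Matrix.fromBlocks_map]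
    simp [Matrix.map_one, Matrix.map_zero]
  have hV' : IsUnit (V.map f).det := by
    have := ((Matrix.isUnit_iff_isUnit_det _).1 hV).map f
    rwa [RingHom.map_det] at this
  have hU' : IsUnit (U.map f).det := by
    have := ((Matrix.isUnit_iff_isUnit_det _).1 hU).map f
    rwa [RingHom.map_det] at this
  have h2 := congrArg Matrix.rank h'
  rw [Matrix.rank_mul_eq_left_of_isUnit_det _ _ hU', Matrix.rank_mul_eq_right_of_isUnit_det _ _ hV',
    Matrix.rank_submatrix, ← Matrix.diagonal_one, ← Matrix.diagonal_zero,
    Matrix.fromBlocks_diagonal, Matrix.rank_diagonal] at h2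
  rw [h2, Fintype.card_subtype, Finset.card_filter, Fintype.sum_sum_type]
  simp

/-- For a real symmetric matrix, `(tr A)² ≤ rank A · tr A²`: Cauchy–Schwarz on the nonzero
eigenvalues. -/
lemma trace_sq_le_rank_mul {I : Type*} [Fintype I] [DecidableEq I] (A : Matrix I I ℝ)
    (hA : A.IsHermitian) : A.trace ^ 2 ≤ A.rank * ∑ i, ∑ j, A i j ^ 2 := by
  have h1 : A.trace = ∑ i, hA.eigenvalues i := by simpa using hA.trace_eq_sum_eigenvalues
  have h2 : ∑ i, ∑ j, A i j ^ 2 = ∑ i, hA.eigenvalues i ^ 2 := by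
    have e : ∑ i, ∑ j, A i j ^ 2 = (A * A).trace := by
      rw [Matrix.trace]
      refine Finset.sum_congr rfl fun i _ => ?_
      rw [Matrix.diag_apply, Matrix.mul_apply]
      refine Finset.sum_congr rfl fun j _ => ?_
      have : A j i = A i j := by simpa using hA.apply i j
      rw [this, sq]
    rw [e]
    conv_lhs => rw [hA.spectral_theorem]
    rw [← map_mul, Unitary.conjStarAlgAut_apply, Matrix.trace_mul_cycle]
    simp [Matrix.trace, sq]
  have h3 : (A.rank : ℝ) = ((Finset.univ.filter fun i => hA.eigenvalues i ≠ 0).card : ℝ) := by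
    rw [hA.rank_eq_card_non_zero_eigs, Fintype.card_subtype]
  have h4 : ∑ i, hA.eigenvalues i
      = ∑ i ∈ Finset.univ.filter fun i => hA.eigenvalues i ≠ 0, hA.eigenvalues i :=
    (Finset.sum_filter_ne_zero _).symm
  rw [h1, h2, h3, h4]
  refine sq_sum_le_card_mul_sum_sq.trans ?_
  gcongr
  exact Finset.subset_univ _

/-- The rank of an integer matrix over a field of characteristic zero is bounded below through the
Gram matrix of its rows. -/
lemma gram_rank {K I J : Type*} [Field K] [CharZero K] [Fintype I] [DecidableEq I] [Fintype J]
    (R : Matrix I J ℤ) :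
    (∑ i, ∑ j, R i j ^ 2) ^ 2
      ≤ ((R.map (Int.cast : ℤ → K)).rank : ℤ) * ∑ i, ∑ i', (∑ j, R i j * R i' j) ^ 2 := by
  set G : Matrix I I ℤ := R * R.transpose
  have hGK : G.map (Int.cast : ℤ → K) = (G.map (Int.cast : ℤ → ℚ)).map (algebraMap ℚ K) := by
    ext; simp
  have hGR : G.map (Int.cast : ℤ → ℝ) = (G.map (Int.cast : ℤ → ℚ)).map (algebraMap ℚ ℝ) := by
    ext; simp
  have h1 : (G.map (Int.cast : ℤ → ℝ)).rank = (G.map (Int.cast : ℤ → K)).rank := by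
    rw [hGK, hGR, rank_map_field, rank_map_field]
  have h2 : (G.map (Int.cast : ℤ → K)).rank ≤ (R.map (Int.cast : ℤ → K)).rank := by
    have : G.map (Int.cast : ℤ → K) = R.map (Int.cast : ℤ → K) * R.transpose.map (Int.cast : ℤ → K) :=
      Matrix.map_mul (f := Int.castRingHom K)
    rw [this]
    exact Matrix.rank_mul_le_left _ _
  have hs : (G.map (Int.cast : ℤ → ℝ)).IsHermitian := by
    ext i j
    simp [G, Matrix.mul_apply, mul_comm]
  have h3 := trace_sq_le_rank_mul _ hs
  have h4 : (G.map (Int.cast : ℤ → ℝ)).trace = ((∑ i, ∑ j, R i j ^ 2 : ℤ) : ℝ) := by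
    simp [G, Matrix.trace, Matrix.mul_apply, sq]
  have h5 : ∑ i, ∑ j, (G.map (Int.cast : ℤ → ℝ)) i j ^ 2
      = ((∑ i, ∑ i', (∑ j, R i j * R i' j) ^ 2 : ℤ) : ℝ) := by
    simp [G, Matrix.mul_apply]
  rw [h4, h5, h1] at h3
  have h6 : (∑ i, ∑ j, R i j ^ 2) ^ 2
      ≤ ((G.map (Int.cast : ℤ → K)).rank : ℤ) * ∑ i, ∑ i', (∑ j, R i j * R i' j) ^ 2 := by
    exact_mod_cast h3
  refine h6.trans ?_
  gcongr

/-! ### Counting Eulerian trails -/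

/-- `Trail s l t`: the list `l` of directed edges is a walk from `s` to `t`. -/
def Trail {V : Type*} : V → List (V × V) → V → Prop
  | s, [], t => s = t
  | s, e :: l, t => e.1 = s ∧ Trail e.2 l t

/-- Directed multigraphs on the vertex set `V` with `N` labelled edges and two marked vertices. -/
abbrev Cols (V : Type*) (N : ℕ) := (Fin N → V × V) × V × V

/-- The ordering `σ` of the edges of `c` is an Eulerian trail between the marked vertices. -/
def Valid {V : Type*} {N : ℕ} (σ : Equiv.Perm (Fin N)) (c : Cols V N) : Prop :=
  Trail c.2.1 (List.ofFn fun i => c.1 (σ i)) c.2.2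

/-- The `0`-`1` indicator of `Valid`. -/
def vind {V : Type*} {N : ℕ} (σ : Equiv.Perm (Fin N)) (c : Cols V N) : ℕ :=
  open Classical in if Valid σ c then 1 else 0

/-- The number of occurrences of `x` in the word `a`. -/
def occ {V : Type*} {N : ℕ} (a : Fin N → V) (x : V) : ℕ :=
  open Classical in ∑ i, if a i = x then 1 else 0

/-- Greedy count: a trail is determined by the order in which the outgoing edges of each vertex
are used, so a multigraph has at most `∏ₓ (outdegree x)!` Eulerian trails. -/
lemma sum_valid_le {V : Type*} [Fintype V] : ∀ {N : ℕ} (c : Cols V N),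
    ∑ σ : Equiv.Perm (Fin N), vind σ c ≤ ∏ x, (occ (fun i => (c.1 i).1) x).factorial := by
  classical
  intro N
  induction N with
  | zero =>
    intro c
    simp only [occ, Finset.univ_eq_empty, Finset.sum_empty, Nat.factorial_zero, Finset.prod_const_one]
    rw [Fintype.sum_unique, vind]
    split_ifs <;> simp
  | succ N ih =>
    rintro ⟨g, s, t⟩
    rw [← Equiv.Perm.decomposeFin.symm.sum_comp, Fintype.sum_prod_type]
    -- the first edge `p` must leave `s`; the rest is a trail in the multigraph without `p`
    set g' : Fin (N + 1) → Fin N → V × V := fun p i => g (Equiv.swap 0 p i.succ) with hg'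
    have h1 : ∀ p (σ : Equiv.Perm (Fin N)), vind (Equiv.Perm.decomposeFin.symm (p, σ)) (g, s, t)
        = if (g p).1 = s then vind σ (g' p, (g p).2, t) else 0 := by
      intro p σ
      unfold vind Valid
      simp only [List.ofFn_succ, Equiv.Perm.decomposeFin_symm_apply_zero,
        Equiv.Perm.decomposeFin_symm_apply_succ, Trail, hg']
      split_ifs <;> simp_all
    have h2 : ∀ p x, occ (fun i => (g i).1) x
        = (if (g p).1 = x then 1 else 0) + occ (fun i => (g' p i).1) x := by
      intro p x
      unfold occ
      rw [← Equiv.sum_comp (Equiv.swap 0 p), Fin.sum_univ_succ]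
      simp [hg']
    have h3 : ∀ p, (g p).1 = s → ∏ x, (occ (fun i => (g i).1) x).factorial
        = occ (fun i => (g i).1) s * ∏ x, (occ (fun i => (g' p i).1) x).factorial := by
      intro p hp
      rw [← Finset.mul_prod_erase _ _ (Finset.mem_univ s),
        ← Finset.mul_prod_erase (Finset.univ : Finset V)
          (fun x => (occ (fun i => (g' p i).1) x).factorial) (Finset.mem_univ s),
        h2 p s, if_pos hp, add_comm 1, Nat.factorial_succ, mul_assoc]
      congr 2
      refine Finset.prod_congr rfl fun x hx => ?_
      rw [h2 p x, if_neg, zero_add]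
      rintro rfl
      simp [hp] at hx
    set P := ∏ x, (occ (fun i => (g i).1) x).factorial with hP
    by_cases hs : occ (fun i => (g i).1) s = 0
    · have : ∀ p, (g p).1 ≠ s := by
        intro p hp
        have := h2 p s
        rw [if_pos hp] at this
        omega
      simp [h1, this]
    · have key : ∀ p, ∑ σ : Equiv.Perm (Fin N),
          vind (Equiv.Perm.decomposeFin.symm (p, σ)) (g, s, t)
          ≤ (if (g p).1 = s then 1 else 0) * (P / occ (fun i => (g i).1) s) := by
        intro p
        simp only [h1]
        by_cases hp : (g p).1 = s
        · simp only [hp, if_true, one_mul]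
          rw [h3 p hp, Nat.mul_div_cancel_left _ (Nat.pos_of_ne_zero hs)]
          exact ih _
        · simp [hp]
      calc _ ≤ ∑ p, (if (g p).1 = s then 1 else 0) * (P / occ (fun i => (g i).1) s) :=
            Finset.sum_le_sum fun p _ => key p
        _ = occ (fun i => (g i).1) s * (P / occ (fun i => (g i).1) s) := by
            rw [← Finset.sum_mul]; rfl
        _ ≤ P := Nat.mul_div_le _ _

/-- A trail is determined by its last vertex and the sources of its edges. -/
lemma trail_unique {V : Type*} : ∀ (l l' : List (V × V)) (s s' t : V), Trail s l t →
    Trail s' l' t → l.map Prod.fst = l'.map Prod.fst → s = s' ∧ l = l'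
  | [], [], s, s', t, h, h', _ => ⟨(show s = t from h).trans (show s' = t from h').symm, rfl⟩
  | e :: l, e' :: l', s, s', t, h, h', hm => by
    obtain ⟨h1, h2⟩ := h
    obtain ⟨h1', h2'⟩ := h'
    simp only [List.map_cons, List.cons.injEq] at hm
    obtain ⟨h3, h4⟩ := trail_unique l l' _ _ t h2 h2' hm.2
    exact ⟨h1 ▸ h1' ▸ hm.1, by rw [h4, Prod.ext hm.1 h3]⟩

/-- The words of length `N` whose `i`-th letter lies in `A i`. -/
def words {V : Type*} [Fintype V] (A : ℕ → Finset V) (N : ℕ) : Finset (Fin N → V) :=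
  open Classical in Finset.univ.filter fun a => ∀ i : Fin N, a i ∈ A i

/-- Appending a letter `x` to a word `a` multiplies `∏ₓ (occ a x)!` by `occ a x + 1`. -/
lemma sum_words_succ {V : Type*} [Fintype V] (A : ℕ → Finset V) (N q : ℕ)
    (hq : ∀ a ∈ words A N, ∑ x ∈ A N, occ a x ≤ q) :
    ∑ a ∈ words A (N + 1), ∏ x, (occ a x).factorial
      ≤ ((A N).card + q) * ∑ a ∈ words A N, ∏ x, (occ a x).factorial := by
  classical
  have h1 : ∀ (x : V) (b : Fin N → V) (y : V), occ (Fin.snoc b x : Fin (N + 1) → V) y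
      = occ b y + if x = y then 1 else 0 := by
    intro x b y
    unfold occ
    rw [Fin.sum_univ_castSucc]
    simp
  have h2 : ∀ (x : V) (b : Fin N → V), ∏ y, (occ (Fin.snoc b x : Fin (N + 1) → V) y).factorial
      = (occ b x + 1) * ∏ y, (occ b y).factorial := by
    intro x b
    rw [← Finset.mul_prod_erase _ _ (Finset.mem_univ x),
        ← Finset.mul_prod_erase (Finset.univ : Finset V)
          (fun y => (occ b y).factorial) (Finset.mem_univ x), h1, if_pos rfl,
          Nat.factorial_succ, mul_assoc]
    congr 2
    refine Finset.prod_congr rfl fun y hy => ?_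
    rw [h1, if_neg, add_zero]
    rintro rfl
    simp at hy
  have h3 : ∑ a ∈ words A (N + 1), ∏ x, (occ a x).factorial
      = ∑ b ∈ words A N, ∑ x ∈ A N, (occ b x + 1) * ∏ y, (occ b y).factorial := by
    rw [← Finset.sum_product']
    symm
    refine Finset.sum_bij' (fun p _ => (Fin.snoc p.1 p.2 : Fin (N + 1) → V))
      (fun a _ => (Fin.init a, a (Fin.last N))) ?_ ?_ ?_ ?_ ?_
    · rintro ⟨b, x⟩ h
      simp only [words, Finset.mem_product, Finset.mem_filter, Finset.mem_univ, true_and] at h ⊢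
      intro i
      refine Fin.lastCases ?_ (fun i => ?_) i
      · simpa using h.2
      · simpa using h.1 i
    · intro a h
      simp only [words, Finset.mem_product, Finset.mem_filter, Finset.mem_univ, true_and] at h ⊢
      exact ⟨fun i => by simpa [Fin.init] using h i.castSucc, by simpa using h (Fin.last N)⟩
    · rintro ⟨b, x⟩ h
      simp
    · intro a h
      simp
    · rintro ⟨b, x⟩ h
      exact (h2 x b).symm
  rw [h3, Finset.mul_sum]
  refine Finset.sum_le_sum fun b hb => ?_
  rw [← Finset.sum_mul, Finset.sum_add_distrib, Finset.sum_const, smul_eq_mul, mul_one, add_comm]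
  exact Nat.mul_le_mul_right _ (Nat.add_le_add_left (hq b hb) _)

lemma sum_occ {V : Type*} {N : ℕ} (a : Fin N → V) (S : Finset V) :
    ∑ x ∈ S, occ a x = open Classical in (Finset.univ.filter fun i => a i ∈ S).card := by
  classical
  unfold occ
  rw [Finset.sum_comm, Finset.card_filter]
  refine Finset.sum_congr rfl fun i _ => ?_
  simp

/-- The alphabet used at place `i`: `K` before place `j`, and `L` from then on. -/
def phase {V : Type*} (K L : Finset V) (j i : ℕ) : Finset V := if i < j then K else L

/-- The products `∏ₓ (occ a x)!` over two-phase words sum to at most a product of two rising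
factorials, rather than `(j + r)!` each. -/
lemma sum_words_le {V : Type*} [Fintype V] (K L : Finset V) (hKL : Disjoint K L) (j r : ℕ) :
    ∑ a ∈ words (phase K L j) (j + r), ∏ x, (occ a x).factorial
      ≤ K.card.ascFactorial j * L.card.ascFactorial r := by
  classical
  have base : ∀ i ≤ j, ∑ a ∈ words (phase K L j) i, ∏ x, (occ a x).factorial
      ≤ K.card.ascFactorial i := by
    intro i
    induction i with
    | zero =>
      intro _
      rw [Nat.ascFactorial_zero]
      calc _ ≤ ∑ a : Fin 0 → V, ∏ x, (occ a x).factorial :=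
            Finset.sum_le_sum_of_subset (Finset.subset_univ _)
        _ = 1 := by simp [occ]
    | succ i ih =>
      intro hi
      refine (sum_words_succ _ i i fun a _ => ?_).trans ?_
      · rw [sum_occ]
        exact (Finset.card_le_univ _).trans (by simp)
      · rw [Nat.ascFactorial_succ, phase, if_pos (by omega)]
        exact Nat.mul_le_mul_left _ (ih (by omega))
  induction r with
  | zero => simpa using base j le_rfl
  | succ r ih =>
    rw [← add_assoc]
    refine (sum_words_succ _ (j + r) r fun a ha => ?_).trans ?_
    · rw [sum_occ]
      have : (Finset.univ.filter fun i => a i ∈ phase K L j (j + r))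
          ⊆ Finset.univ.image (Fin.natAdd j : Fin r → Fin (j + r)) := by
        intro i hi
        simp only [words, Finset.mem_filter, Finset.mem_univ, true_and] at hi ha
        have h1 := ha i
        by_cases hij : (i : ℕ) < j
        · rw [phase, if_neg (by omega)] at hi
          rw [phase, if_pos hij] at h1
          exact absurd hi (Finset.disjoint_left.1 hKL h1)
        · refine Finset.mem_image.2 ⟨⟨i - j, by omega⟩, Finset.mem_univ _, ?_⟩
          ext
          simp
          omega
      exact (Finset.card_le_card this).trans (Finset.card_image_le.trans (by simp))
    · rw [Nat.ascFactorial_succ, phase, if_neg (by omega), mul_left_comm]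
      exact Nat.mul_le_mul_left _ ih

/-- Second-moment count for a family of multigraphs all of whose Eulerian trails have their first
`j` sources in `K` and the other `r` in `L`: the number of pairs of trails of the same graph. Once
the first trail `σ` is fixed, the graph amounts to the word of its sources along `σ` together with
its end vertex, and the second trails are counted by `sum_valid_le`. -/
lemma sum_pairs_le {V : Type*} [Fintype V] {J : Type*} [Fintype J] (K L : Finset V)
    (hKL : Disjoint K L) (j r : ℕ) (c : J → Cols V (j + r)) (hc : Function.Injective c)
    (hA : ∀ x σ, Valid σ (c x) → ∀ i : Fin (j + r), ((c x).1 (σ i)).1 ∈ phase K L j i) :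
    ∑ σ : Equiv.Perm (Fin (j + r)), ∑ τ : Equiv.Perm (Fin (j + r)), ∑ x,
        vind σ (c x) * vind τ (c x)
      ≤ (j + r).factorial *
        (Fintype.card V * (K.card.ascFactorial j * L.card.ascFactorial r)) := by
  classical
  have hσ : ∀ σ : Equiv.Perm (Fin (j + r)), ∑ τ : Equiv.Perm (Fin (j + r)), ∑ x,
        vind σ (c x) * vind τ (c x)
      ≤ Fintype.card V * (K.card.ascFactorial j * L.card.ascFactorial r) := by
    intro σ
    rw [Finset.sum_comm]
    simp_rw [← Finset.mul_sum]
    let f : J → V × (Fin (j + r) → V) := fun x => ((c x).2.2, fun i => ((c x).1 (σ i)).1)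
    have hocc : ∀ x y, occ (fun i => ((c x).1 i).1) y = occ (f x).2 y := by
      intro x y
      unfold occ
      rw [← Equiv.sum_comp σ]
    calc ∑ x, vind σ (c x) * ∑ τ, vind τ (c x)
        ≤ ∑ x, vind σ (c x) * ∏ y, (occ (f x).2 y).factorial := by
          refine Finset.sum_le_sum fun x _ => Nat.mul_le_mul_left _ ?_
          simp_rw [← hocc]
          exact sum_valid_le _
      _ = ∑ x with Valid σ (c x), ∏ y, (occ (f x).2 y).factorial := by
          rw [Finset.sum_filter]
          refine Finset.sum_congr rfl fun x _ => ?_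
          unfold vind
          split_ifs <;> simp
      _ = ∑ p ∈ (Finset.univ.filter fun x => Valid σ (c x)).image f,
            ∏ y, (occ p.2 y).factorial := by
          rw [Finset.sum_image]
          intro x hx x' hx' h
          simp only [Finset.coe_filter, Finset.mem_univ, true_and, Set.mem_ofPred_eq] at hx hx'
          simp only [f, Prod.mk.injEq] at h
          unfold Valid at hx hx'
          rw [← h.1] at hx'
          obtain ⟨h1, h2⟩ := trail_unique _ _ _ _ _ hx hx' (by
            simp only [List.map_ofFn]
            exact congrArg _ h.2)
          apply hc
          refine Prod.ext ?_ (Prod.ext h1 h.1)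
          have h3 := List.ofFn_injective h2
          funext i
          simpa using congrFun h3 (σ.symm i)
      _ ≤ ∑ p ∈ Finset.univ ×ˢ words (phase K L j) (j + r), ∏ y, (occ p.2 y).factorial := by
          refine Finset.sum_le_sum_of_subset ?_
          intro p hp
          simp only [Finset.mem_image, Finset.mem_filter, Finset.mem_univ, true_and] at hp
          obtain ⟨x, hx, rfl⟩ := hp
          simp only [words, Finset.mem_product, Finset.mem_filter, Finset.mem_univ, true_and]
          exact hA x σ hx
      _ = Fintype.card V *
            ∑ a ∈ words (phase K L j) (j + r), ∏ y, (occ a y).factorial := by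
          rw [Finset.sum_product]
          simp
      _ ≤ _ := Nat.mul_le_mul_left _ (sum_words_le K L hKL j r)
  refine (Finset.sum_le_sum fun σ _ => hσ σ).trans ?_
  rw [Finset.sum_const, smul_eq_mul, Finset.card_univ, Fintype.card_perm, Fintype.card_fin]

/-! ### The sign rule and Gauss sums -/

/-- The nontrivial sign character of `ZMod 2`. -/
def chi (x : ZMod 2) : ℤ := if x = 0 then 1 else -1

lemma chi_zero : chi 0 = 1 := rfl

lemma chi_add : ∀ x y, chi (x + y) = chi x * chi y := by decide

lemma chi_mul_self : ∀ x, chi x * chi x = 1 := by decide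

lemma chi_sq (x : ZMod 2) : chi x ^ 2 = 1 := by rw [sq, chi_mul_self]

lemma chi_le_one : ∀ x, chi x ≤ 1 := by decide

lemma chi_sum {ι : Type*} (s : Finset ι) (f : ι → ZMod 2) :
    chi (∑ i ∈ s, f i) = ∏ i ∈ s, chi (f i) := by
  classical
  induction s using Finset.induction_on with
  | empty => simp [chi_zero]
  | insert a s ha ih => rw [Finset.sum_insert ha, Finset.prod_insert ha, chi_add, ih]

/-- The number (mod 2) of inversions of the list `l` between two odd letters, where `ε` gives the
parity of the letters. -/
def qList {ι : Type*} [LinearOrder ι] (ε : ι → ZMod 2) : List ι → ZMod 2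
  | [] => 0
  | a :: l => (l.map fun b => if b < a then ε a * ε b else 0).sum + qList ε l

/-- The sign picked up when `a` is inserted into a sorted product. -/
lemma prod_orderedInsert {ι R : Type*} [LinearOrder ι] [Ring R] (ε : ι → ZMod 2) (g : ι → R)
    (hg : ∀ i j, g i * g j = chi (ε i * ε j) • (g j * g i)) (a : ι) : ∀ l : List ι,
    l.Pairwise (· ≤ ·) → g a * (l.map g).prod
      = chi (l.map fun b => if b < a then ε a * ε b else 0).sum •
        ((l.orderedInsert (· ≤ ·) a).map g).prod
  | [], _ => by simp [chi_zero]
  | b :: l, h => by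
    rw [List.pairwise_cons] at h
    rw [List.orderedInsert]
    split_ifs with hab
    · have : ((b :: l).map fun b => if b < a then ε a * ε b else 0).sum = 0 := by
        apply List.sum_eq_zero
        intro x hx
        simp only [List.mem_map] at hx
        obtain ⟨y, hy, rfl⟩ := hx
        refine if_neg (not_lt.2 ?_)
        rcases List.mem_cons.1 hy with rfl | hy
        · exact hab
        · exact hab.trans (h.1 y hy)
      rw [this, chi_zero, one_smul]
      simp
    · simp only [List.map_cons, List.prod_cons, List.sum_cons]
      rw [if_pos (not_le.1 hab), chi_add, ← mul_assoc, hg a b, smul_mul_assoc, mul_assoc,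
        prod_orderedInsert ε g hg a l h.2, mul_smul_comm, smul_smul]

lemma prod_insertionSort {ι R : Type*} [LinearOrder ι] [Ring R] (ε : ι → ZMod 2) (g : ι → R)
    (hg : ∀ i j, g i * g j = chi (ε i * ε j) • (g j * g i)) : ∀ l : List ι,
    (l.map g).prod = chi (qList ε l) • ((l.insertionSort (· ≤ ·)).map g).prod
  | [] => by simp [qList, chi_zero]
  | a :: l => by
    have h : (l.map fun b => if b < a then ε a * ε b else 0).sum
        = ((l.insertionSort (· ≤ ·)).map fun b => if b < a then ε a * ε b else 0).sum :=
      (((List.perm_insertionSort (· ≤ ·) l).map _).sum_eq).symm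
    rw [List.map_cons, List.prod_cons, prod_insertionSort ε g hg l, mul_smul_comm,
      prod_orderedInsert ε g hg a _ (List.pairwise_insertionSort _ l), smul_smul, ← h, ← chi_add,
      List.insertionSort, qList, add_comm]
    rfl

lemma qList_ofFn {ι : Type*} [LinearOrder ι] (ε : ι → ZMod 2) : ∀ {M : ℕ} (f : Fin M → ι),
    qList ε (List.ofFn f) = ∑ a, ∑ b, if a < b ∧ f b < f a then ε (f a) * ε (f b) else 0
  | 0, f => by simp [qList]
  | M + 1, f => by
    rw [List.ofFn_succ, qList, qList_ofFn, Fin.sum_univ_succ, Fin.sum_univ_succ]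
    simp only [Fin.sum_univ_succ, Fin.succ_lt_succ_iff, Fin.succ_pos, true_and, Fin.not_lt_zero,
      false_and, if_false, zero_add, lt_self_iff_false, List.map_ofFn, List.sum_ofFn]
    rfl

/-- The number (mod 2) of inversions of `σ` between two odd labels, as a quadratic form in the
parities `ε`. -/
def qPerm {N : ℕ} (σ : Equiv.Perm (Fin N)) (ε : Fin N → ZMod 2) : ZMod 2 :=
  ∑ i, ∑ j, if σ.symm i < σ.symm j ∧ j < i then ε i * ε j else 0

/-- Reordering a product of elements which commute up to the sign rule for the parities `ε`. -/
lemma prod_perm {N : ℕ} {R : Type*} [Ring R] (ε : Fin N → ZMod 2) (g : Fin N → R)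
    (hg : ∀ i j, g i * g j = chi (ε i * ε j) • (g j * g i)) (σ : Equiv.Perm (Fin N)) :
    (List.ofFn fun i => g (σ i)).prod = chi (qPerm σ ε) • (List.ofFn g).prod := by
  have h1 : (List.ofFn fun i => g (σ i)) = (List.ofFn fun i => σ i).map g := by
    rw [List.map_ofFn]; rfl
  have h2 : (List.ofFn fun i => σ i).insertionSort (· ≤ ·) = List.ofFn fun i : Fin N => i := by
    refine List.Perm.eq_of_pairwise' (List.pairwise_insertionSort _ _) ?_
      ((List.perm_insertionSort _ _).trans ?_)
    · rw [List.pairwise_ofFn]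
      exact fun _ _ h => h.le
    · exact Equiv.Perm.ofFn_comp_perm σ (fun i => i)
  rw [h1, prod_insertionSort ε g hg, h2, List.map_ofFn, qList_ofFn]
  congr 2
  unfold qPerm
  conv_rhs => rw [← Equiv.sum_comp σ]
  refine Finset.sum_congr rfl fun a _ => ?_
  conv_rhs => rw [← Equiv.sum_comp σ]
  simp

/-- The sum of the `δ`-values of the labels that `σ` puts before `i`. -/
def pre {N : ℕ} (σ : Equiv.Perm (Fin N)) (δ : Fin N → ZMod 2) (i : Fin N) : ZMod 2 :=
  ∑ j, if σ.symm j < σ.symm i then δ j else 0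

/-- The polarization of `qPerm σ` compares partial sums along `σ` with partial sums along the
natural order. -/
lemma qPerm_add {N : ℕ} (σ : Equiv.Perm (Fin N)) (ε δ : Fin N → ZMod 2) :
    qPerm σ (ε + δ) = qPerm σ ε + qPerm σ δ + ∑ i, ε i * (pre σ δ i + pre 1 δ i) := by
  have h : ∑ i, ε i * (pre σ δ i + pre 1 δ i)
      = ∑ i, ∑ j, ((if σ.symm i < σ.symm j ∧ j < i then ε i * δ j else 0)
        + (if σ.symm j < σ.symm i ∧ i < j then ε i * δ j else 0)) := by
    refine Finset.sum_congr rfl fun i _ => ?_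
    unfold pre
    rw [← Finset.sum_add_distrib, Finset.mul_sum]
    refine Finset.sum_congr rfl fun j _ => ?_
    have two : δ j + δ j = 0 := CharTwo.add_self_eq_zero _
    have e : (1 : Equiv.Perm (Fin N)).symm = 1 := rfl
    rw [e]
    rcases lt_trichotomy i j with hij | rfl | hij
    · rcases lt_or_gt_of_ne (σ.symm.injective.ne hij.ne) with h | h <;>
        simp [hij, h, hij.not_gt, h.not_gt]
    · simp
    · rcases lt_or_gt_of_ne (σ.symm.injective.ne hij.ne) with h | h <;>
        simp [hij, h, hij.not_gt, h.not_gt, two]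
  have h' : ∑ i, ∑ j, (if σ.symm j < σ.symm i ∧ i < j then ε i * δ j else 0)
      = ∑ i, ∑ j, (if σ.symm i < σ.symm j ∧ j < i then δ i * ε j else 0) := by
    rw [Finset.sum_comm]
    simp only [mul_comm]
  simp only [h, Finset.sum_add_distrib]
  rw [h']
  simp only [qPerm, ← Finset.sum_add_distrib]
  refine Finset.sum_congr rfl fun i _ => Finset.sum_congr rfl fun j _ => ?_
  split_ifs
  · simp only [Pi.add_apply]; ring
  · simp

/-- Orthogonality of the characters of `(ZMod 2) ^ N`. -/
lemma sum_chi_linear {N : ℕ} (L : Fin N → ZMod 2) :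
    ∑ ε : Fin N → ZMod 2, chi (∑ i, ε i * L i) = if L = 0 then 2 ^ N else 0 := by
  classical
  simp only [chi_sum]
  have e := Finset.prod_univ_sum (fun _ : Fin N => (Finset.univ : Finset (ZMod 2)))
    (fun i e => chi (e * L i))
  rw [Fintype.piFinset_univ] at e
  rw [← e]
  have h : ∀ x : ZMod 2, ∑ e : ZMod 2, chi (e * x) = if x = 0 then 2 else 0 := by decide
  simp only [h]
  split_ifs with hL
  · subst hL; simp
  · obtain ⟨i, hi⟩ := Function.ne_iff.1 hL
    exact Finset.prod_eq_zero (Finset.mem_univ i) (if_neg hi)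

/-- The Gauss sum of the difference of two of the quadratic forms is controlled by its radical, which
consists of the `δ` whose partial sums along `σ` and along `τ` agree. -/
lemma gauss_sq_le {N : ℕ} (σ τ : Equiv.Perm (Fin N)) :
    (∑ ε, chi (qPerm σ ε) * chi (qPerm τ ε)) ^ 2
      ≤ 2 ^ N * ((Finset.univ.filter fun δ : Fin N → ZMod 2 => pre σ δ = pre τ δ).card : ℤ) := by
  classical
  set Q : (Fin N → ZMod 2) → ZMod 2 := fun ε => qPerm σ ε + qPerm τ ε with hQ
  have hadd : ∀ ε δ, Q (ε + δ) = Q ε + Q δ + ∑ i, ε i * (pre σ δ i + pre τ δ i) := by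
    intro ε δ
    have e : ∑ i, ε i * (pre σ δ i + pre τ δ i)
        = ∑ i, ε i * (pre σ δ i + pre 1 δ i) + ∑ i, ε i * (pre τ δ i + pre 1 δ i) := by
      rw [← Finset.sum_add_distrib]
      refine Finset.sum_congr rfl fun i _ => ?_
      have two : pre 1 δ i + pre 1 δ i = 0 := CharTwo.add_self_eq_zero _
      linear_combination (-ε i) * two
    simp only [hQ, qPerm_add, e]
    ring
  have hs : ∑ ε, chi (qPerm σ ε) * chi (qPerm τ ε) = ∑ ε, chi (Q ε) := by
    simp only [hQ, chi_add]
  have h1 : (∑ ε, chi (Q ε)) ^ 2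
      = ∑ δ, chi (Q δ) * ∑ ε : Fin N → ZMod 2, chi (∑ i, ε i * (pre σ δ i + pre τ δ i)) := by
    rw [sq, Finset.sum_mul]
    have : ∀ ε, chi (Q ε) * ∑ ε', chi (Q ε')
        = ∑ δ, chi (Q δ) * chi (∑ i, ε i * (pre σ δ i + pre τ δ i)) := by
      intro ε
      rw [← Equiv.sum_comp (Equiv.addLeft ε), Finset.mul_sum]
      refine Finset.sum_congr rfl fun δ _ => ?_
      rw [Equiv.coe_addLeft, hadd, chi_add (Q ε + Q δ), chi_add (Q ε)]
      linear_combination (chi (Q δ) * chi (∑ i, ε i * (pre σ δ i + pre τ δ i)))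
        * chi_mul_self (Q ε)
    simp only [this]
    rw [Finset.sum_comm]
    simp only [Finset.mul_sum]
  rw [hs, h1]
  calc _ ≤ ∑ δ : Fin N → ZMod 2, if pre σ δ = pre τ δ then (2 : ℤ) ^ N else 0 := by
        refine Finset.sum_le_sum fun δ _ => ?_
        rw [sum_chi_linear]
        have : ((fun i => pre σ δ i + pre τ δ i) = 0) ↔ pre σ δ = pre τ δ := by
          constructor
          · intro h
            funext i
            exact CharTwo.add_eq_zero.1 (congrFun h i)
          · intro h
            funext i
            exact CharTwo.add_eq_zero.2 (congrFun h i)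
        simp only [this]
        split_ifs
        · exact mul_le_of_le_one_left (by positivity) (chi_le_one _)
        · simp
    _ = _ := by
        rw [← Finset.sum_filter, Finset.sum_const, nsmul_eq_mul, mul_comm]

/-- The partial sums of `s, y 0, y 1, …` form a walk in `ZMod 2`. -/
lemma trail_partial_sums : ∀ {N : ℕ} (s : ZMod 2) (y : Fin N → ZMod 2),
    Trail s (List.ofFn fun a => (s + ∑ b, (if b < a then y b else 0),
      s + ∑ b, (if b < a then y b else 0) + y a)) (s + ∑ b, y b)
  | 0, s, y => by simp [Trail]
  | N + 1, s, y => by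
    rw [List.ofFn_succ]
    refine ⟨by simp, ?_⟩
    have := trail_partial_sums (s + y 0) fun i => y i.succ
    simpa [Fin.sum_univ_succ, add_assoc] using this

/-- A radical vector `δ`, read as the increments of a walk, gives a multigraph on the vertex set
`ZMod 2` in which both `σ` and `τ` are Eulerian trails starting at `0`. -/
lemma card_radical_le {N : ℕ} (σ τ : Equiv.Perm (Fin N)) :
    (Finset.univ.filter fun δ : Fin N → ZMod 2 => pre σ δ = pre τ δ).card
      ≤ ∑ c : Cols (ZMod 2) N, vind σ c * vind τ c := by
  classical
  let f : (Fin N → ZMod 2) → Cols (ZMod 2) N := fun δ =>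
    (fun i => (pre σ δ i, pre σ δ i + δ i), 0, ∑ i, δ i)
  have hv : ∀ (ρ : Equiv.Perm (Fin N)) δ, pre σ δ = pre ρ δ → Valid ρ (f δ) := by
    intro ρ δ h
    have := trail_partial_sums 0 fun i => δ (ρ i)
    unfold Valid
    simp only [f, h]
    have e : ∀ a, pre ρ δ (ρ a) = ∑ b, if b < a then δ (ρ b) else 0 := by
      intro a
      unfold pre
      rw [← Equiv.sum_comp ρ]
      simp
    simp only [e]
    rw [← Equiv.sum_comp ρ]
    simpa using this
  have hf : Function.Injective f := by
    intro δ δ' h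
    funext i
    have h1 := congrFun (congrArg Prod.fst h) i
    simp only [f, Prod.mk.injEq] at h1
    rw [h1.1] at h1
    exact add_left_cancel h1.2
  calc _ = ((Finset.univ.filter fun δ : Fin N → ZMod 2 => pre σ δ = pre τ δ).image f).card :=
        (Finset.card_image_of_injective _ hf).symm
    _ ≤ (Finset.univ.filter fun c : Cols (ZMod 2) N => Valid σ c ∧ Valid τ c).card := by
        refine Finset.card_le_card ?_
        intro c hc
        simp only [Finset.mem_image, Finset.mem_filter, Finset.mem_univ, true_and] at hc ⊢
        obtain ⟨δ, hδ, rfl⟩ := hc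
        exact ⟨hv σ δ rfl, hv τ δ hδ⟩
    _ = _ := by
        rw [Finset.card_filter]
        refine Finset.sum_congr rfl fun c _ => ?_
        unfold vind
        by_cases h1 : Valid σ c <;> by_cases h2 : Valid τ c <;> simp [h1, h2]

/-! ### Lower bounds for codimensions -/

section Lower

/-- Evaluating at finitely many tuples and applying linear functionals bounds the codimension from
below by the rank of the resulting matrix. -/
lemma rank_le_cseq {B : Type*} [Ring B] [Algebra F B] (S : Submodule F B) (N : ℕ) {J : Type*}
    [Fintype J] (x : J → Fin N → S) (φ : J → B →ₗ[F] F)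
    (R : Matrix (Equiv.Perm (Fin N)) J ℤ)
    (h : ∀ j σ, φ j (List.ofFn fun i => (x j (σ i) : B)).prod = (R σ j : F)) :
    (R.map (Int.cast : ℤ → F)).rank ≤ cseq F S N := by
  classical
  let E : ((Fin N → S) → B) →ₗ[F] (J → F) :=
    LinearMap.pi fun j => (φ j).comp (LinearMap.proj (x j))
  have hE : E ∘ₗ assocEval F S N = (R.map (Int.cast : ℤ → F)).transpose.mulVecLin := by
    ext c j
    simp [E, assocEval, h]
  rw [← Matrix.rank_transpose, Matrix.rank, ← hE, LinearMap.range_comp]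
  exact Submodule.finrank_map_le _ _

/-- The superposition of two multigraphs with the same labels, on the product vertex set. -/
def pairCol {V V' : Type*} {N : ℕ} (c : Cols V N) (c' : Cols V' N) : Cols (V × V') N :=
  (fun i => (((c.1 i).1, (c'.1 i).1), ((c.1 i).2, (c'.1 i).2)),
    (c.2.1, c'.2.1), (c.2.2, c'.2.2))

lemma trail_pair {V V' : Type*} : ∀ {N : ℕ} (f : Fin N → V × V) (f' : Fin N → V' × V')
    (s t : V) (s' t' : V'),
    Trail (s, s') (List.ofFn fun i => (((f i).1, (f' i).1), ((f i).2, (f' i).2))) (t, t')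
      ↔ Trail s (List.ofFn f) t ∧ Trail s' (List.ofFn f') t'
  | 0, f, f', s, t, s', t' => by simp [Trail]
  | N + 1, f, f', s, t, s', t' => by
    simp only [List.ofFn_succ, Trail, Prod.mk.injEq]
    rw [trail_pair (fun i => f i.succ) (fun i => f' i.succ)]
    tauto

lemma valid_pair {V V' : Type*} {N : ℕ} (σ : Equiv.Perm (Fin N)) (c : Cols V N) (c' : Cols V' N) :
    Valid σ (pairCol c c') ↔ Valid σ c ∧ Valid σ c' :=
  trail_pair _ _ _ _ _ _

lemma vind_pair {V V' : Type*} {N : ℕ} (σ : Equiv.Perm (Fin N)) (c : Cols V N) (c' : Cols V' N) :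
    vind σ (pairCol c c') = vind σ c * vind σ c' := by
  unfold vind
  rw [valid_pair]
  by_cases h : Valid σ c <;> by_cases h' : Valid σ c' <;> simp [h, h']

lemma pairCol_inj {V V' : Type*} {N : ℕ} {c d : Cols V N} {c' d' : Cols V' N}
    (h : pairCol c c' = pairCol d d') : c = d ∧ c' = d' := by
  simp only [pairCol, Prod.mk.injEq, funext_iff] at h
  obtain ⟨h1, ⟨h2, h3⟩, h4, h5⟩ := h
  exact ⟨Prod.ext (funext fun i => Prod.ext (h1 i).1.1 (h1 i).2.1) (Prod.ext h2 h4),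
    Prod.ext (funext fun i => Prod.ext (h1 i).1.2 (h1 i).2.2) (Prod.ext h3 h5)⟩

lemma vind_sq {V : Type*} {N : ℕ} (σ : Equiv.Perm (Fin N)) (c : Cols V N) :
    vind σ c ^ 2 = vind σ c := by
  unfold vind; split_ifs <;> simp

lemma cancel_fact {n Q c D : ℕ} (h : (n.factorial * Q) ^ 2 ≤ c * (n.factorial * D)) :
    n.factorial * Q ^ 2 ≤ c * D := by
  refine Nat.le_of_mul_le_mul_left ?_ n.factorial_pos
  calc _ = (n.factorial * Q) ^ 2 := by ring
    _ ≤ _ := h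
    _ = _ := by ring

/-- Codimension bound when every multigraph of a family is detected, up to signs, by an evaluation
and a functional. The signs may be arbitrary. -/
lemma lower_signed [CharZero F] {B : Type*} [Ring B] [Algebra F B] (S : Submodule F B)
    {V : Type*} [Fintype V] {J : Type*} [Fintype J] (K L : Finset V) (hKL : Disjoint K L)
    (j r : ℕ) (c : J → Cols V (j + r)) (hc : Function.Injective c)
    (hA : ∀ x σ, Valid σ (c x) → ∀ i : Fin (j + r), ((c x).1 (σ i)).1 ∈ phase K L j i)
    (Q : ℕ) (hQ : ∀ σ : Equiv.Perm (Fin (j + r)), Q ≤ ∑ x, vind σ (c x))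
    (e : Equiv.Perm (Fin (j + r)) → J → ZMod 2)
    (h : ∀ x, ∃ (y : Fin (j + r) → S) (φ : B →ₗ[F] F), ∀ σ,
      φ (List.ofFn fun i => (y (σ i) : B)).prod = ((chi (e σ x) * vind σ (c x) : ℤ) : F)) :
    (j + r).factorial * Q ^ 2 ≤ cseq F S (j + r) *
      (Fintype.card V ^ 2 * ((K.card ^ 2).ascFactorial j * (L.card ^ 2).ascFactorial r)) := by
  classical
  choose y φ hφ using h
  set R : Matrix (Equiv.Perm (Fin (j + r))) J ℤ := fun σ x => chi (e σ x) * vind σ (c x) with hR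
  have hrank := rank_le_cseq F S (j + r) y φ R hφ
  have hg := gram_rank (K := F) R
  have h1 : (((j + r).factorial * Q : ℕ) : ℤ) ≤ ∑ σ, ∑ x, R σ x ^ 2 := by
    have : ∀ σ x, R σ x ^ 2 = (vind σ (c x) : ℤ) := by
      intro σ x
      rw [hR]
      simp only
      rw [mul_pow, chi_sq, one_mul]
      exact_mod_cast vind_sq σ (c x)
    simp only [this]
    have h2 : (j + r).factorial * Q ≤ ∑ σ : Equiv.Perm (Fin (j + r)), ∑ x, vind σ (c x) := by
      calc _ = ∑ _σ : Equiv.Perm (Fin (j + r)), Q := by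
            rw [Finset.sum_const, smul_eq_mul, Finset.card_univ, Fintype.card_perm,
              Fintype.card_fin]
        _ ≤ _ := Finset.sum_le_sum fun σ _ => hQ σ
    exact_mod_cast h2
  have h2 : ∑ σ, ∑ τ, (∑ x, R σ x * R τ x) ^ 2 ≤
      (((j + r).factorial * (Fintype.card (V × V) *
        ((K ×ˢ K).card.ascFactorial j * (L ×ˢ L).card.ascFactorial r)) : ℕ) : ℤ) := by
    refine le_trans ?_ (Int.ofNat_le.2 (sum_pairs_le (K ×ˢ K) (L ×ˢ L) ?_ j r
      (fun p : J × J => pairCol (c p.1) (c p.2)) ?_ ?_))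
    · push_cast
      refine Finset.sum_le_sum fun σ _ => Finset.sum_le_sum fun τ _ => ?_
      have h3 : |∑ x, R σ x * R τ x| ≤ ∑ x, (vind σ (c x) * vind τ (c x) : ℤ) := by
        refine (Finset.abs_sum_le_sum_abs _ _).trans (Finset.sum_le_sum fun x _ => ?_)
        have ha : ∀ z, |chi z| = 1 := by decide
        rw [hR]
        simp only [abs_mul, ha, one_mul, Nat.abs_cast, le_refl]
      calc (∑ x, R σ x * R τ x) ^ 2 = |∑ x, R σ x * R τ x| ^ 2 := (sq_abs _).symm
        _ ≤ (∑ x, (vind σ (c x) * vind τ (c x) : ℤ)) ^ 2 := by gcongr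
        _ = _ := by
          rw [sq, Finset.sum_mul_sum, ← Finset.sum_product', Finset.univ_product_univ]
          refine Finset.sum_congr rfl fun p _ => ?_
          rw [vind_pair, vind_pair]
          push_cast
          ring
    · rw [Finset.disjoint_left]
      rintro ⟨a, b⟩ h h'
      rw [Finset.mem_product] at h h'
      exact Finset.disjoint_left.1 hKL h.1 h'.1
    · rintro ⟨a, b⟩ ⟨a', b'⟩ h
      obtain ⟨h, h'⟩ := pairCol_inj h
      exact Prod.ext (hc h) (hc h')
    · rintro ⟨a, b⟩ σ hv i
      rw [valid_pair] at hv
      have ha := hA a σ hv.1 i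
      have hb := hA b σ hv.2 i
      unfold phase at ha hb ⊢
      split_ifs at ha hb ⊢ with hi
      · exact Finset.mem_product.2 ⟨ha, hb⟩
      · exact Finset.mem_product.2 ⟨ha, hb⟩
  apply cancel_fact
  have h3 : ((((j + r).factorial * Q) ^ 2 : ℕ) : ℤ) ≤ ((cseq F S (j + r) * ((j + r).factorial *
      (Fintype.card (V × V) *
        ((K ×ˢ K).card.ascFactorial j * (L ×ˢ L).card.ascFactorial r))) : ℕ) : ℤ) := by
    rw [Nat.cast_pow, Nat.cast_mul (cseq F S (j + r))]
    calc _ ≤ (∑ σ, ∑ x, R σ x ^ 2) ^ 2 := by gcongr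
      _ ≤ _ := hg
      _ ≤ _ := by gcongr
  have h4 := Int.ofNat_le.1 h3
  simpa only [Finset.card_product, Fintype.card_prod, ← sq] using h4

lemma trail_word {V : Type*} : ∀ {N : ℕ} (v : Fin (N + 1) → V),
    Trail (v 0) (List.ofFn fun i : Fin N => (v i.castSucc, v i.succ)) (v (Fin.last N))
  | 0, v => rfl
  | N + 1, v => by
    rw [List.ofFn_succ]
    exact ⟨rfl, trail_word fun i => v i.succ⟩

/-- The multigraph whose edges, taken in the order `σ`, spell the walk `v`. -/
def walkCol {V : Type*} {N : ℕ} (σ : Equiv.Perm (Fin N)) (v : Fin (N + 1) → V) : Cols V N :=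
  (fun i => (v (σ.symm i).castSucc, v (σ.symm i).succ), v 0, v (Fin.last N))

lemma valid_walkCol {V : Type*} {N : ℕ} (σ : Equiv.Perm (Fin N)) (v : Fin (N + 1) → V) :
    Valid σ (walkCol σ v) := by
  simpa [Valid, walkCol] using trail_word v

lemma walkCol_injective {V : Type*} {N : ℕ} (σ : Equiv.Perm (Fin N)) :
    Function.Injective (walkCol σ : (Fin (N + 1) → V) → Cols V N) := by
  intro v v' h
  funext i
  refine Fin.lastCases ?_ (fun i => ?_) i
  · exact congrArg (fun c => c.2.2) h
  · simpa [walkCol] using congrArg (fun c : Cols V N => (c.1 (σ i)).1) h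

/-- A lower bound for the number of graphs of a family traversed by `σ`, by listing walks. -/
lemma card_le_sum_vind {V : Type*} {N : ℕ} {J W : Type*} [Fintype J] [Fintype W]
    (σ : Equiv.Perm (Fin N)) (c : J → Cols V N) (v : W → Fin (N + 1) → V)
    (hv : Function.Injective v) (f : W → J) (hf : ∀ w, c (f w) = walkCol σ (v w)) :
    Fintype.card W ≤ ∑ x, vind σ (c x) := by
  classical
  have hinj : Function.Injective f := by
    intro w w' h
    apply hv
    apply walkCol_injective σ
    rw [← hf, ← hf, h]
  calc Fintype.card W = (Finset.univ.image f).card := by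
        rw [Finset.card_image_of_injective _ hinj, Finset.card_univ]
    _ ≤ (Finset.univ.filter fun x => Valid σ (c x)).card := by
        refine Finset.card_le_card fun x hx => ?_
        simp only [Finset.mem_image, Finset.mem_univ, true_and, Finset.mem_filter] at hx ⊢
        obtain ⟨w, rfl⟩ := hx
        rw [hf]
        exact valid_walkCol σ _
    _ = _ := by
        rw [Finset.card_filter]
        rfl

/-- Codimension bound when, for each multigraph, every choice of parities of the edges gives an
evaluation producing the sign rule for these parities. -/
lemma lower_parities [CharZero F] {B : Type*} [Ring B] [Algebra F B] (S : Submodule F B)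
    {V : Type*} [Fintype V] (N : ℕ)
    (h : ∀ (c : Cols V N) (ε : Fin N → ZMod 2),
      ∃ (y : Fin N → S) (φ : B →ₗ[F] F), ∀ σ,
      φ (List.ofFn fun i => (y (σ i) : B)).prod = ((chi (qPerm σ ε) * vind σ c : ℤ) : F)) :
    N.factorial * (2 ^ N * Fintype.card V ^ (N + 1)) ^ 2 ≤ cseq F S N *
      (2 ^ N * (2 * Fintype.card V ^ 2 * (2 * Fintype.card V ^ 2).ascFactorial N)) := by
  classical
  choose y φ hφ using h
  set R : Matrix (Equiv.Perm (Fin N)) (Cols V N × (Fin N → ZMod 2)) ℤ :=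
    fun σ x => chi (qPerm σ x.2) * vind σ x.1 with hR
  have hrank := rank_le_cseq F S N (fun x : Cols V N × (Fin N → ZMod 2) => y x.1 x.2)
    (fun x => φ x.1 x.2) R (fun x σ => hφ x.1 x.2 σ)
  have hg := gram_rank (K := F) R
  have h1 : ((N.factorial * (2 ^ N * Fintype.card V ^ (N + 1)) : ℕ) : ℤ)
      ≤ ∑ σ, ∑ x, R σ x ^ 2 := by
    have : ∀ σ x, R σ x ^ 2 = (vind σ x.1 : ℤ) := by
      intro σ x
      rw [hR]
      simp only
      rw [mul_pow, chi_sq, one_mul]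
      exact_mod_cast vind_sq σ x.1
    simp only [this]
    have h2 : N.factorial * (2 ^ N * Fintype.card V ^ (N + 1)) ≤
        ∑ σ : Equiv.Perm (Fin N), ∑ x : Cols V N × (Fin N → ZMod 2), vind σ x.1 := by
      calc _ = ∑ _σ : Equiv.Perm (Fin N), (2 ^ N * Fintype.card V ^ (N + 1)) := by
            rw [Finset.sum_const, smul_eq_mul, Finset.card_univ, Fintype.card_perm,
              Fintype.card_fin]
        _ ≤ _ := Finset.sum_le_sum fun σ _ => by
            rw [Fintype.sum_prod_type_right]
            simp only [Finset.sum_const, smul_eq_mul, Finset.card_univ, Fintype.card_fun,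
              ZMod.card, Fintype.card_fin]
            refine Nat.mul_le_mul_left _ ?_
            have := card_le_sum_vind σ (fun c : Cols V N => c) (fun v => v)
              Function.injective_id (walkCol σ) (fun _ => rfl)
            simpa using this
    exact_mod_cast h2
  have h2 : ∑ σ, ∑ τ, (∑ x, R σ x * R τ x) ^ 2 ≤
      ((2 ^ N * (N.factorial * (2 * Fintype.card V ^ 2 *
        (2 * Fintype.card V ^ 2).ascFactorial N)) : ℕ) : ℤ) := by
    have hp := sum_pairs_le (V := (V × V) × ZMod 2) Finset.univ ∅ (by simp) N 0
      (fun p : (Cols V N × Cols V N) × Cols (ZMod 2) N => pairCol (pairCol p.1.1 p.1.2) p.2)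
      (by
        rintro ⟨⟨a, b⟩, d⟩ ⟨⟨a', b'⟩, d'⟩ h
        obtain ⟨h, h'⟩ := pairCol_inj h
        obtain ⟨h1, h2⟩ := pairCol_inj h
        simp only at h1 h2 h'
        rw [h1, h2, h'])
      (by
        intro x σ _ i
        rw [phase, if_pos (show (i : ℕ) < N from i.2)]
        exact Finset.mem_univ _)
    have hcard : Fintype.card ((V × V) × ZMod 2) = 2 * Fintype.card V ^ 2 := by
      rw [Fintype.card_prod, Fintype.card_prod, ZMod.card]; ring
    simp only [Finset.card_univ, hcard, Nat.ascFactorial_zero, mul_one, add_zero] at hp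
    refine le_trans ?_ (Int.ofNat_le.2 (Nat.mul_le_mul_left _ hp))
    push_cast
    rw [Finset.mul_sum]
    refine Finset.sum_le_sum fun σ _ => ?_
    rw [Finset.mul_sum]
    refine Finset.sum_le_sum fun τ _ => ?_
    have e1 : ∑ x, R σ x * R τ x = (∑ c : Cols V N, (vind σ c * vind τ c : ℤ))
        * ∑ ε, chi (qPerm σ ε) * chi (qPerm τ ε) := by
      rw [Finset.sum_mul_sum, ← Finset.sum_product', Finset.univ_product_univ]
      refine Finset.sum_congr rfl fun x _ => ?_
      rw [hR]
      ring
    have e2 : (∑ ε, chi (qPerm σ ε) * chi (qPerm τ ε)) ^ 2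
        ≤ 2 ^ N * ∑ c : Cols (ZMod 2) N, (vind σ c * vind τ c : ℤ) := by
      refine (gauss_sq_le σ τ).trans ?_
      gcongr
      exact_mod_cast card_radical_le σ τ
    rw [e1, mul_pow]
    calc _ ≤ (∑ c : Cols V N, (vind σ c * vind τ c : ℤ)) ^ 2
          * (2 ^ N * ∑ c : Cols (ZMod 2) N, (vind σ c * vind τ c : ℤ)) := by gcongr
      _ = 2 ^ N * (((∑ c : Cols V N, (vind σ c * vind τ c : ℤ))
          * (∑ c : Cols V N, (vind σ c * vind τ c : ℤ)))
          * ∑ c : Cols (ZMod 2) N, (vind σ c * vind τ c : ℤ)) := by ring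
      _ = _ := by
        congr 1
        rw [Finset.sum_mul_sum, ← Finset.sum_product', Finset.univ_product_univ,
          Finset.sum_mul_sum, ← Finset.sum_product', Finset.univ_product_univ]
        refine Finset.sum_congr rfl fun p _ => ?_
        rw [vind_pair, vind_pair, vind_pair, vind_pair]
        push_cast
        ring
  apply cancel_fact
  have h3 : (((N.factorial * (2 ^ N * Fintype.card V ^ (N + 1))) ^ 2 : ℕ) : ℤ) ≤
      ((cseq F S N * (2 ^ N * (N.factorial * (2 * Fintype.card V ^ 2 *
        (2 * Fintype.card V ^ 2).ascFactorial N))) : ℕ) : ℤ) := by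
    rw [Nat.cast_pow, Nat.cast_mul (cseq F S N)]
    calc _ ≤ (∑ σ, ∑ x, R σ x ^ 2) ^ 2 := by gcongr
      _ ≤ _ := hg
      _ ≤ _ := by gcongr
  have h4 := Int.ofNat_le.1 h3
  rw [mul_left_comm] at h4 ⊢
  rw [mul_left_comm (N.factorial)]
  convert h4 using 2

end Lower

/-! ### Monomials of the Grassmann algebra -/

section Grassmann

open scoped Pointwise

/-- The generators of the Grassmann algebra. -/
def gen {ι : Type*} (i : ι) : Grass F ι := ExteriorAlgebra.ι F (Finsupp.single i 1)

/-- The monomial of the Grassmann algebra spelled by a word in the generators. -/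
def gw {ι : Type*} (w : List ι) : Grass F ι := (w.map (gen F)).prod

lemma gw_nil {ι : Type*} : gw F ([] : List ι) = 1 := rfl

lemma gw_cons {ι : Type*} (a : ι) (w : List ι) : gw F (a :: w) = gen F a * gw F w := by simp [gw]

lemma gw_append {ι : Type*} (u w : List ι) : gw F (u ++ w) = gw F u * gw F w := by simp [gw]

lemma gw_flatten {ι : Type*} : ∀ L : List (List ι), gw F L.flatten = (L.map (gw F)).prod
  | [] => rfl
  | w :: L => by rw [List.flatten_cons, gw_append, gw_flatten L]; simp

lemma gw_eq {ι : Type*} (w : List ι) :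
    gw F w = ExteriorAlgebra.ιMulti F w.length (fun i => Finsupp.single (w.get i) (1 : F)) := by
  rw [ExteriorAlgebra.ιMulti_apply, gw]
  congr 1
  conv_lhs => rw [← List.ofFn_get w, List.map_ofFn]
  rfl

lemma gw_eq_zero {ι : Type*} {w : List ι} (h : ¬ w.Nodup) : gw F w = 0 := by
  rw [gw_eq]
  refine AlternatingMap.map_eq_zero_of_not_injective _ _ fun hi => h ?_
  rw [List.nodup_iff_injective_get]
  intro a b hab
  exact hi (by simp only [hab])

/-- The determinant of the coordinates along `w` detects the monomial `w`. -/
lemma gw_ne_zero {ι : Type*} {w : List ι} (h : w.Nodup) : gw F w ≠ 0 := by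
  classical
  rw [gw_eq]
  intro h0
  let f : (ι →₀ F) [⋀^Fin w.length]→ₗ[F] F :=
    (Matrix.detRowAlternating (n := Fin w.length) (R := F)).compLinearMap
      (LinearMap.pi fun j => Finsupp.lapply (w.get j))
  let g : ∀ i, (ι →₀ F) [⋀^Fin i]→ₗ[F] F := fun i =>
    if hi : i = w.length then hi ▸ f else 0
  have h1 := ExteriorAlgebra.liftAlternating_apply_ιMulti g
    (fun i : Fin w.length => Finsupp.single (w.get i) (1 : F))
  rw [h0, map_zero] at h1
  have h2 : g w.length = f := by simp [g]
  rw [h2] at h1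
  have h3 : f (fun i : Fin w.length => Finsupp.single (w.get i) (1 : F))
      = Matrix.det (1 : Matrix (Fin w.length) (Fin w.length) F) := by
    simp only [f, AlternatingMap.compLinearMap_apply]
    change Matrix.det _ = _
    congr 1
    ext i j
    rw [Matrix.one_apply]
    change (Finsupp.single (w.get i) (1 : F)) (w.get j) = _
    rw [Finsupp.single_apply]
    simp only [(List.nodup_iff_injective_get.1 h).eq_iff]
  rw [h3, Matrix.det_one] at h1
  exact zero_ne_one h1

lemma gw_eq_zero_of_lt {m : ℕ} {w : List (Fin m)} (h : m < w.length) : gw F w = 0 := by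
  refine gw_eq_zero F fun hw => ?_
  have := hw.length_le_card
  rw [Fintype.card_fin] at this
  omega

lemma chi_eq_neg_one_pow (n : ℕ) : chi (n : ZMod 2) = (-1) ^ n := by
  induction n with
  | zero => simp [chi_zero]
  | succ n ih =>
    rw [Nat.cast_succ, chi_add, ih, pow_succ]
    rfl

lemma gen_mul_gw {ι : Type*} (a : ι) : ∀ w : List ι,
    gen F a * gw F w = chi (w.length : ZMod 2) • (gw F w * gen F a)
  | [] => by simp [gw_nil, chi_zero]
  | b :: w => by
    have h : gen F a * gen F b = - (gen F b * gen F a) :=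
      eq_neg_of_add_eq_zero_left (ExteriorAlgebra.ι_add_mul_swap _ _)
    rw [gw_cons, ← mul_assoc, h, neg_mul, mul_assoc, gen_mul_gw a w, List.length_cons,
      chi_eq_neg_one_pow, chi_eq_neg_one_pow, pow_succ, mul_smul_comm, mul_assoc]
    simp

lemma gw_mul_gw {ι : Type*} (w : List ι) : ∀ u : List ι,
    gw F u * gw F w = chi (u.length * w.length : ZMod 2) • (gw F w * gw F u)
  | [] => by simp [gw_nil, chi_zero]
  | a :: u => by
    rw [gw_cons, mul_assoc, gw_mul_gw w u, mul_smul_comm, ← mul_assoc, gen_mul_gw, smul_mul_assoc,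
      smul_smul, ← chi_add, List.length_cons, mul_assoc]
    congr 2
    push_cast
    ring

lemma gw_mem_pow {ι : Type*} : ∀ w : List ι,
    gw F w ∈ (CliffordAlgebra.ι (0 : QuadraticForm F (ι →₀ F))).range ^ w.length
  | [] => by
    rw [List.length_nil, pow_zero]
    exact Submodule.one_le.1 le_rfl
  | a :: w => by
    rw [gw_cons, List.length_cons, pow_succ']
    exact Submodule.mul_mem_mul (LinearMap.mem_range_self _ _) (gw_mem_pow w)

lemma gw_mem {ι : Type*} (w : List ι) : gw F w ∈ grassPart F ι (w.length : ZMod 2) :=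
  Submodule.mem_iSup_of_mem
    (p := fun j : {n : ℕ // (n : ZMod 2) = w.length} =>
      (CliffordAlgebra.ι (0 : QuadraticForm F (ι →₀ F))).range ^ (j : ℕ))
    ⟨w.length, rfl⟩ (gw_mem_pow F w)

/-- Monomials of the right parity span the homogeneous parts. -/
lemma grassPart_le {ι : Type*} (i : ZMod 2) :
    grassPart F ι i ≤ Submodule.span F (gw F '' {w : List ι | (w.length : ZMod 2) = i}) := by
  have h1 : (CliffordAlgebra.ι (0 : QuadraticForm F (ι →₀ F))).range
      = Submodule.span F (Set.range (gen F : ι → Grass F ι)) := by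
    rw [LinearMap.range_eq_map, ← (Finsupp.basisSingleOne (R := F) (ι := ι)).span_eq,
      Submodule.map_span, ← Set.range_comp]
    congr 1
  have h2 : ∀ n : ℕ, ∀ x ∈ (Set.range (gen F : ι → Grass F ι)) ^ n,
      ∃ w : List ι, w.length = n ∧ gw F w = x := by
    intro n
    induction n with
    | zero =>
      intro x hx
      rw [pow_zero, Set.mem_one] at hx
      exact ⟨[], rfl, hx.symm⟩
    | succ n ih =>
      intro x hx
      rw [pow_succ', Set.mem_mul] at hx
      obtain ⟨_, ⟨a, rfl⟩, y, hy, rfl⟩ := hx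
      obtain ⟨w, hw, rfl⟩ := ih y hy
      exact ⟨a :: w, by simp [hw], gw_cons F a w⟩
  refine iSup_le ?_
  rintro ⟨n, hn⟩
  simp only
  rw [h1, Submodule.span_pow]
  refine Submodule.span_mono fun x hx => ?_
  obtain ⟨w, hw, rfl⟩ := h2 n x hx
  exact ⟨w, by simp [hw, hn], rfl⟩

instance finite_grass (m : ℕ) : Module.Finite F (Grass F (Fin m)) :=
  Module.Finite.of_basis (Finsupp.basisSingleOne (R := F) (ι := Fin m)).ExteriorAlgebra

/-- A functional on the Grassmann algebra that does not distinguish `1` from a generator. -/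
lemma exists_functional_gen {ι : Type*} (a : ι) :
    ∃ ψ : Grass F ι →ₗ[F] F, ψ 1 = 1 ∧ ψ (gen F a) = 1 := by
  let f : ∀ i, (ι →₀ F) [⋀^Fin i]→ₗ[F] F := fun i => match i with
    | 0 => AlternatingMap.constOfIsEmpty F _ _ 1
    | 1 => AlternatingMap.ofSubsingleton F _ _ 0 (Finsupp.lapply a)
    | _ => 0
  refine ⟨ExteriorAlgebra.liftAlternating f, ?_, ?_⟩
  · rw [ExteriorAlgebra.liftAlternating_one]
    simp [f]
  · rw [gen, ExteriorAlgebra.liftAlternating_ι]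
    simp [f]

end Grassmann

/-! ### Evaluations on matrix units -/

section Evaluations

lemma prod_tmul {A B : Type*} [Ring A] [Ring B] [Algebra F A] [Algebra F B] :
    ∀ {N : ℕ} (a : Fin N → A) (b : Fin N → B),
    (List.ofFn fun i => a i ⊗ₜ[F] b i).prod = (List.ofFn a).prod ⊗ₜ[F] (List.ofFn b).prod
  | 0, a, b => by simp [Algebra.TensorProduct.one_def]
  | N + 1, a, b => by
    simp only [List.ofFn_succ, List.prod_cons]
    rw [prod_tmul, Algebra.TensorProduct.tmul_mul_tmul]

/-- The functional `f ⊗ g` on a tensor product. -/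
def tensFun {A B : Type*} [Ring A] [Ring B] [Algebra F A] [Algebra F B]
    (f : A →ₗ[F] F) (g : B →ₗ[F] F) : A ⊗[F] B →ₗ[F] F :=
  LinearMap.mul' F F ∘ₗ TensorProduct.map f g

lemma tensFun_tmul {A B : Type*} [Ring A] [Ring B] [Algebra F A] [Algebra F B]
    (f : A →ₗ[F] F) (g : B →ₗ[F] F) (a : A) (b : B) : tensFun F f g (a ⊗ₜ b) = f a * g b := by
  simp [tensFun]

lemma tmul_mem_grassEnv {A : Type*} [Ring A] [Algebra F A] (𝒜 : ZMod 2 → Submodule F A)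
    {ι : Type*} {x : A} {w : List ι} (hx : x ∈ 𝒜 w.length) :
    x ⊗ₜ gw F w ∈ grassEnv F A 𝒜 ι := by
  have hw := gw_mem F w
  have h01 : ∀ z : ZMod 2, z = 0 ∨ z = 1 := by decide
  rcases h01 (w.length : ZMod 2) with h | h <;> rw [h] at hx hw
  · exact Submodule.mem_sup_left ⟨⟨x, hx⟩ ⊗ₜ ⟨_, hw⟩, by simp⟩
  · exact Submodule.mem_sup_right ⟨⟨x, hx⟩ ⊗ₜ ⟨_, hw⟩, by simp⟩

/-- An entry of a product of matrix units tells whether the edges form a walk. -/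
lemma prod_single_apply {V : Type*} [Fintype V] [DecidableEq V] (t : V) : ∀ (l : List (V × V))
    (s : V), (l.map fun e => Matrix.single e.1 e.2 (1 : F)).prod s t =
      open Classical in if Trail s l t then 1 else 0
  | [], s => by
    by_cases h : s = t <;> simp [Trail, h]
  | e :: l, s => by
    rw [List.map_cons, List.prod_cons, Matrix.mul_apply]
    simp only [prod_single_apply t l, Trail]
    rw [Finset.sum_eq_single e.2]
    · by_cases h : e.1 = s <;> by_cases hT : Trail e.2 l t <;> simp [h, hT]
    · intro b _ hb
      rw [Matrix.single_apply, if_neg (fun h => hb h.2.symm), zero_mul]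
    · simp

/-- With infinitely many Grassmann generators, matrix units of prescribed parities detect Eulerian
trails up to the sign rule. -/
lemma exists_eval_inf {A : Type*} [Ring A] [Algebra F A] (𝒜 : ZMod 2 → Submodule F A)
    {V : Type*} [Fintype V] [DecidableEq V] (π : A →ₐ[F] Matrix V V F) {N : ℕ} (c : Cols V N)
    (ε : Fin N → ZMod 2) (u : Fin N → A) (hu : ∀ i, u i ∈ 𝒜 (ε i))
    (hπ : ∀ i, π (u i) = Matrix.single (c.1 i).1 (c.1 i).2 1) :
    ∃ (y : Fin N → grassEnv F A 𝒜 ℕ) (φ : A ⊗[F] Grass F ℕ →ₗ[F] F), ∀ σ,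
      φ (List.ofFn fun i => (y (σ i) : A ⊗[F] Grass F ℕ)).prod
        = ((chi (qPerm σ ε) * vind σ c : ℤ) : F) := by
  classical
  let w : Fin N → List ℕ := fun i => if ε i = 1 then [(i : ℕ)] else []
  have hw : ∀ i, ((w i).length : ZMod 2) = ε i := by
    intro i
    have h01 : ∀ z : ZMod 2, z ≠ 1 → z = 0 := by decide
    by_cases h : ε i = 1
    · simp [w, h]
    · simp [w, h01 _ h]
  have hne : (List.ofFn fun i => gw F (w i)).prod ≠ 0 := by
    have : (List.ofFn fun i => gw F (w i)) = (List.ofFn w).map (gw F) := by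
      rw [List.map_ofFn]; rfl
    rw [this, ← gw_flatten]
    refine gw_ne_zero F (List.nodup_flatten.2 ⟨?_, ?_⟩)
    · intro l hl
      rw [List.mem_ofFn] at hl
      obtain ⟨i, rfl⟩ := hl
      by_cases h : ε i = 1 <;> simp [w, h]
    · rw [List.pairwise_ofFn]
      intro i j hij
      by_cases h : ε i = 1 <;> by_cases h' : ε j = 1 <;> simp [w, h, h']
      exact fun h => hij.ne (Fin.ext h.symm)
  obtain ⟨ψ, hψ⟩ := Module.Projective.exists_dual_eq_one F hne
  refine ⟨fun i => ⟨u i ⊗ₜ gw F (w i), tmul_mem_grassEnv F 𝒜 ((hw i).symm ▸ hu i)⟩,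
    tensFun F (Matrix.entryLinearMap F F c.2.1 c.2.2 ∘ₗ π.toLinearMap) ψ, fun σ => ?_⟩
  simp only
  rw [prod_tmul F (fun i => u (σ i)) (fun i => gw F (w (σ i))), tensFun_tmul,
    prod_perm ε (fun i => gw F (w i)) (fun i j => by
      rw [gw_mul_gw, ← hw i, ← hw j]) σ, map_zsmul, hψ]
  have h1 : π (List.ofFn fun i => u (σ i)).prod
      = ((List.ofFn fun i => c.1 (σ i)).map fun e => Matrix.single e.1 e.2 (1 : F)).prod := by
    rw [map_list_prod, List.map_ofFn, List.map_ofFn]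
    congr 2
    funext i
    exact hπ (σ i)
  have h2 : (Matrix.entryLinearMap F F c.2.1 c.2.2 ∘ₗ π.toLinearMap) (List.ofFn fun i => u (σ i)).prod
      = (vind σ c : F) := by
    rw [LinearMap.comp_apply]
    change π (List.ofFn fun i => u (σ i)).prod c.2.1 c.2.2 = _
    rw [h1, prod_single_apply, vind, Valid]
    split_ifs <;> simp
  rw [h2]
  push_cast
  simp [mul_comm]

end Evaluations

/-! ### Incidence systems -/

section Incidence

lemma trail_end_unique {V : Type*} {t t' : V} : ∀ (l : List (V × V)) (s s' : V),
    l ≠ [] → Trail s l t → Trail s' l t' → s = s' ∧ t = t'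
  | [], _, _, h, _, _ => absurd rfl h
  | [e], s, s', _, h, h' => ⟨h.1.symm.trans h'.1, h.2.symm.trans h'.2⟩
  | e :: e' :: l, s, s', _, h, h' =>
    ⟨h.1.symm.trans h'.1, (trail_end_unique (e' :: l) _ _ (by simp) h.2 h'.2).2⟩

/-- An incidence system consists of elements `X p q`, for the edges `(p, q)` that do not enter `κ`
from outside, which multiply like matrix units. A product of such units is the unit joining the ends
of the walk, or zero if the edges do not form a walk. -/
lemma prod_incidence {V B : Type*} [DecidableEq V] [Ring B] (κ : V → Prop) (X : V → V → B)
    (hmul : ∀ p q q' r, (κ q → κ p) → (κ r → κ q') →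
      X p q * X q' r = if q = q' then X p r else 0) : ∀ (l : List (V × V)) (e : V × V),
    (∀ d ∈ e :: l, κ d.2 → κ d.1) →
    (∃ t, Trail e.1 (e :: l) t ∧ (κ t → κ e.1) ∧
      ((e :: l).map fun d => X d.1 d.2).prod = X e.1 t) ∨
    ((∀ s t, ¬ Trail s (e :: l) t) ∧ ((e :: l).map fun d => X d.1 d.2).prod = 0)
  | [], e, h => Or.inl ⟨e.2, ⟨rfl, rfl⟩, h e (by simp), by simp⟩
  | e' :: l, e, h => by
    have he := h e (by simp)
    rw [List.map_cons, List.prod_cons]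
    rcases prod_incidence κ X hmul l e' (fun d hd => h d (by simp_all)) with
      ⟨t, h1, h2, h3⟩ | ⟨h1, h2⟩
    · rw [h3, hmul _ _ _ _ he h2]
      split_ifs with h4
      · exact Or.inl ⟨t, ⟨rfl, h4 ▸ h1⟩, fun ht => he (h4 ▸ h2 ht), rfl⟩
      · exact Or.inr ⟨fun s t' ht => h4 ht.2.1.symm, rfl⟩
    · exact Or.inr ⟨fun s t ht => h1 _ _ ht.2, by rw [h2, mul_zero]⟩

/-- Along a walk all of whose edges never enter `κ` from outside, `κ` is lost at most once. -/
lemma trail_pairwise {V : Type*} (κ : V → Prop) {t : V} : ∀ (l : List (V × V)) (s : V),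
    Trail s l t → (∀ d ∈ l, κ d.2 → κ d.1) →
    (∀ d ∈ l, κ d.1 → κ s) ∧ l.Pairwise fun d d' => κ d'.1 → κ d.1
  | [], _, _, _ => by simp
  | e :: l, s, h, hl => by
    obtain ⟨h1, h2⟩ := trail_pairwise κ l e.2 h.2 (fun d hd => hl d (by simp [hd]))
    have he := hl e (by simp)
    have h3 : ∀ d ∈ l, κ d.1 → κ e.1 := fun d hd hk => he (h1 d hd hk)
    refine ⟨?_, List.pairwise_cons.2 ⟨h3, h2⟩⟩
    intro d hd hk
    rw [← h.1]
    rcases List.mem_cons.1 hd with rfl | hd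
    · exact hk
    · exact h3 d hd hk

/-- A property which holds for exactly `j` indices and is inherited downwards holds for the first
`j` indices. -/
lemma lt_iff_of_antitone {N j : ℕ} (f : Fin N → Prop) [DecidablePred f]
    (hf : ∀ i i', i < i' → f i' → f i) (hj : (Finset.univ.filter f).card = j) (i : Fin N) :
    f i ↔ (i : ℕ) < j := by
  constructor
  · intro h
    have : (Finset.Iic i).card ≤ (Finset.univ.filter f).card := by
      refine Finset.card_le_card fun a ha => ?_
      simp only [Finset.mem_filter, Finset.mem_univ, true_and]
      rcases (Finset.mem_Iic.1 ha).lt_or_eq with h' | rfl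
      · exact hf _ _ h' h
      · exact h
    rw [Fin.card_Iic] at this
    omega
  · intro h
    by_contra h'
    have : (Finset.univ.filter f).card ≤ (Finset.Iio i).card := by
      refine Finset.card_le_card fun a ha => ?_
      simp only [Finset.mem_filter, Finset.mem_univ, true_and] at ha
      rw [Finset.mem_Iio]
      by_contra h2
      rcases (not_lt.1 h2).lt_or_eq with h3 | rfl
      · exact h' (hf _ _ h3 ha)
      · exact h' ha
    rw [Fin.card_Iio] at this
    omega

/-- Codimension bound from an incidence system of elements of `S` whose units are linearly
independent; the products passing `j` times through `κ` and then `r` times outside contribute. -/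
lemma lower_incidence [CharZero F] {B : Type*} [Ring B] [Algebra F B] (S : Submodule F B)
    {V : Type*} [Fintype V] [DecidableEq V] (κ : V → Prop) [DecidablePred κ] (X : V → V → B)
    (hX : ∀ p q, (κ q → κ p) → X p q ∈ S)
    (hφ : ∀ s t, ∃ φ : B →ₗ[F] F, ∀ p q, (κ q → κ p) →
      φ (X p q) = if s = p ∧ t = q then 1 else 0)
    (hmul : ∀ p q q' r, (κ q → κ p) → (κ r → κ q') →
      X p q * X q' r = if q = q' then X p r else 0)
    (j r : ℕ) (hjr : 0 < j + r) :
    (j + r).factorial * ((Finset.univ.filter κ).card ^ j *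
        (Finset.univ.filter fun p => ¬ κ p).card ^ r) ^ 2 ≤
      cseq F S (j + r) * (Fintype.card V ^ 2 *
        (((Finset.univ.filter κ).card ^ 2).ascFactorial j *
          ((Finset.univ.filter fun p => ¬ κ p).card ^ 2).ascFactorial r)) := by
  classical
  set K : Finset V := Finset.univ.filter κ with hK
  set L : Finset V := Finset.univ.filter fun p => ¬ κ p with hL
  let J := {c : Cols V (j + r) // (∀ i, κ (c.1 i).2 → κ (c.1 i).1) ∧
    (Finset.univ.filter fun i => κ (c.1 i).1).card = j}
  have hmem : ∀ p i, p ∈ phase K L j i ↔ (κ p ↔ i < j) := by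
    intro p i
    unfold phase
    split_ifs with h <;> simp [hK, hL, h]
  have hcard : ∀ (σ : Equiv.Perm (Fin (j + r))) (f : Fin (j + r) → Prop) [DecidablePred f],
      (Finset.univ.filter fun i => f (σ i)).card = (Finset.univ.filter f).card := by
    intro σ f _
    refine Finset.card_equiv σ fun i => ?_
    simp
  refine lower_signed F S (J := J) K L ?_ j r (fun x => x.1) Subtype.val_injective ?_ _ ?_
    (fun _ _ => 0) ?_
  · rw [hK, hL]
    exact Finset.disjoint_filter_filter_not _ _ _
  · rintro ⟨c, hc1, hc2⟩ σ hv i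
    have h1 := (trail_pairwise κ _ _ hv (by
      intro d hd
      rw [List.mem_ofFn] at hd
      obtain ⟨a, rfl⟩ := hd
      exact hc1 _)).2
    rw [List.pairwise_ofFn] at h1
    rw [hmem]
    refine lt_iff_of_antitone (fun i => κ (c.1 (σ i)).1) h1 ?_ i
    rw [hcard σ fun i => κ (c.1 i).1, hc2]
  · intro σ
    let W := ↥(Fintype.piFinset fun i : Fin (j + r) => phase K L j i)
    have hW : Fintype.card W = K.card ^ j * L.card ^ r := by
      rw [Fintype.card_coe, Fintype.card_piFinset, Fin.prod_univ_add]
      simp [phase]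
    have haW : ∀ (a : W) (i : Fin (j + r)), κ (a.1 i) ↔ (i : ℕ) < j := by
      intro a i
      exact (hmem _ _).1 (Fintype.mem_piFinset.1 a.2 i)
    -- repeating the last letter keeps the final edge from entering `κ`
    let v : W → Fin (j + r + 1) → V := fun a =>
      Fin.snoc (α := fun _ => V) a.1 (a.1 ⟨j + r - 1, by omega⟩)
    have hvc : ∀ a i, v a (Fin.castSucc i) = a.1 i := fun a i => by simp [v]
    have hvs : ∀ (a : W) (i : Fin (j + r)), κ (v a i.succ) → κ (v a i.castSucc) := by
      intro a i
      rw [hvc]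
      by_cases h : (i : ℕ) + 1 < j + r
      · have : i.succ = Fin.castSucc ⟨i + 1, h⟩ := Fin.ext rfl
        rw [this, hvc, haW, haW]
        intro h'
        simp only at h'
        omega
      · have : i.succ = Fin.last _ := Fin.ext (by simp; omega)
        have h2 : i = ⟨j + r - 1, by omega⟩ := Fin.ext (by simp; omega)
        rw [this]
        simp only [v, Fin.snoc_last]
        rw [← h2]
        exact id
    rw [← hW]
    refine card_le_sum_vind σ (fun x : J => x.1) v ?_ (fun a => ⟨walkCol σ (v a), ?_, ?_⟩)
      (fun a => rfl)
    · intro a b hab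
      refine Subtype.ext (funext fun i => ?_)
      rw [← hvc, ← hvc, hab]
    · exact fun i => hvs a _
    · simp only [walkCol, hvc]
      rw [hcard σ.symm fun i => κ (a.1 i)]
      simp only [haW]
      have : (Finset.univ.filter fun i : Fin (j + r) => (i : ℕ) < j)
          = Finset.univ.map (Fin.castAddEmb r) := by
        ext i
        simp only [Finset.mem_filter, Finset.mem_univ, true_and, Finset.mem_map,
          Fin.castAddEmb_apply]
        exact ⟨fun h => ⟨⟨i, h⟩, Fin.ext rfl⟩, fun ⟨b, hb⟩ => hb ▸ b.2⟩
      rw [this, Finset.card_map, Finset.card_univ, Fintype.card_fin]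
  · rintro ⟨c, hc1, hc2⟩
    obtain ⟨φ, hφ⟩ := hφ c.2.1 c.2.2
    refine ⟨fun i => ⟨X (c.1 i).1 (c.1 i).2, hX _ _ (hc1 i)⟩, φ, fun σ => ?_⟩
    rw [chi_zero, one_mul, vind, Valid]
    simp only
    have hl : (List.ofFn fun i => X (c.1 (σ i)).1 (c.1 (σ i)).2)
        = (List.ofFn fun i => c.1 (σ i)).map fun d => X d.1 d.2 := by
      rw [List.map_ofFn]; rfl
    have hall : ∀ d ∈ List.ofFn fun i => c.1 (σ i), κ d.2 → κ d.1 := by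
      intro d hd
      rw [List.mem_ofFn] at hd
      obtain ⟨a, rfl⟩ := hd
      exact hc1 _
    rw [hl]
    rcases h : (List.ofFn fun i => c.1 (σ i)) with _ | ⟨e, l⟩
    · have := congrArg List.length h
      simp at this
      omega
    rw [h] at hall
    rcases prod_incidence κ X hmul l e hall with ⟨t, h1, h2, h3⟩ | ⟨h1, h2⟩
    · rw [h3, hφ _ _ h2]
      by_cases hT : Trail c.2.1 (e :: l) c.2.2
      · rw [if_pos (trail_end_unique _ _ _ (by simp) hT h1), if_pos hT]
        simp
      · rw [if_neg hT, if_neg]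
        · simp
        · rintro ⟨ha, hb⟩
          exact hT (ha ▸ hb ▸ h1)
    · rw [h2, if_neg (h1 _ _)]
      simp

end Incidence

/-! ### Lower bounds for the four envelopes -/

section LowerBounds

lemma single_mem_mklGrade (k ℓ : ℕ) (p q : Fin (k + ℓ)) :
    Matrix.single p q (1 : F) ∈
      mklGrade F k ℓ (if ((p : ℕ) < k ↔ (q : ℕ) < k) then (0 : ZMod 2) else 1) := by
  intro p' q' h
  rw [Matrix.single_apply]
  refine if_neg ?_
  rintro ⟨rfl, rfl⟩
  exact h rfl

lemma single_mem_matGrade (n : ℕ) (p q : Fin n) (z : ZMod 2) :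
    Matrix.single p q (AddMonoidAlgebra.single z (1 : F)) ∈
      matGrade F n (AddMonoidAlgebra.grade F z) := by
  intro p' q'
  rw [Matrix.single_apply]
  split_ifs
  · exact AddMonoidAlgebra.single_mem_grade z 1
  · exact Submodule.zero_mem _

/-- Each edge has the parity of its matrix unit, so a multigraph determines the signs. -/
lemma lower_mkl_inf [CharZero F] (k ℓ N : ℕ) :
    N.factorial * ((k + ℓ) ^ (N + 1)) ^ 2 ≤
      cseq F (grassEnv F (Matrix (Fin (k + ℓ)) (Fin (k + ℓ)) F) (mklGrade F k ℓ) ℕ) N *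
        ((k + ℓ) ^ 2 * ((k + ℓ) ^ 2).ascFactorial N) := by
  have h := lower_signed F
    (grassEnv F (Matrix (Fin (k + ℓ)) (Fin (k + ℓ)) F) (mklGrade F k ℓ) ℕ)
    (V := Fin (k + ℓ)) (J := Cols (Fin (k + ℓ)) N) Finset.univ ∅ (by simp) N 0 (fun c => c)
    Function.injective_id
    (by
      intro x σ _ i
      rw [phase, if_pos (show (i : ℕ) < N from i.2)]
      exact Finset.mem_univ _)
    ((k + ℓ) ^ (N + 1))
    (by
      intro σ
      have := card_le_sum_vind σ (fun c : Cols (Fin (k + ℓ)) N => c) (fun v => v)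
        Function.injective_id (walkCol σ) (fun _ => rfl)
      simpa using this)
    (fun σ c => qPerm σ fun i => if (((c.1 i).1 : ℕ) < k ↔ ((c.1 i).2 : ℕ) < k) then 0 else 1)
    (fun c => exists_eval_inf F (mklGrade F k ℓ) (AlgHom.id F _) c _
      (fun i => Matrix.single (c.1 i).1 (c.1 i).2 1) (fun i => single_mem_mklGrade F k ℓ _ _)
      (fun i => rfl))
  simpa using h

/-- The augmentation `FZ₂ → F` turns units of either parity into matrix units. -/
lemma lower_mat_inf [CharZero F] (n N : ℕ) :
    N.factorial * (2 ^ N * n ^ (N + 1)) ^ 2 ≤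
      cseq F (grassEnv F (Matrix (Fin n) (Fin n) (AddMonoidAlgebra F (ZMod 2)))
          (fun i => matGrade F n (AddMonoidAlgebra.grade F i)) ℕ) N *
        (2 ^ N * (2 * n ^ 2 * (2 * n ^ 2).ascFactorial N)) := by
  have h := lower_parities F
    (grassEnv F (Matrix (Fin n) (Fin n) (AddMonoidAlgebra F (ZMod 2)))
          (fun i => matGrade F n (AddMonoidAlgebra.grade F i)) ℕ)
    (V := Fin n) N (fun c ε => exists_eval_inf F _
      (AlgHom.mapMatrix (AddMonoidAlgebra.lift F F (ZMod 2) 1)) c ε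
      (fun i => Matrix.single (c.1 i).1 (c.1 i).2 (AddMonoidAlgebra.single (ε i) 1))
      (fun i => single_mem_matGrade F n _ _ _)
      (fun i => by
        rw [AlgHom.mapMatrix_apply, Matrix.map_single]
        simp))
  simpa using h

/-- One generator `a`, carried by the matrix units joining the two blocks, provides an incidence
system for the first block `p < k`. -/
lemma lower_mkl_fin [CharZero F] (k ℓ m : ℕ) (hm : 1 ≤ m) (j r : ℕ) (hjr : 0 < j + r) :
    (j + r).factorial * (k ^ j * ℓ ^ r) ^ 2 ≤
      cseq F (grassEnv F (Matrix (Fin (k + ℓ)) (Fin (k + ℓ)) F) (mklGrade F k ℓ) (Fin m)) (j + r) *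
        ((k + ℓ) ^ 2 * ((k ^ 2).ascFactorial j * (ℓ ^ 2).ascFactorial r)) := by
  let a : Fin m := ⟨0, hm⟩
  obtain ⟨ψ, hψ1, hψa⟩ := exists_functional_gen F a
  let w : Fin (k + ℓ) → Fin (k + ℓ) → List (Fin m) := fun p q =>
    if ((p : ℕ) < k ↔ (q : ℕ) < k) then [] else [a]
  have hw : ∀ p q, ((w p q).length : ZMod 2)
      = if ((p : ℕ) < k ↔ (q : ℕ) < k) then (0 : ZMod 2) else 1 := by
    intro p q
    simp only [w]
    split_ifs <;> simp
  have hψ : ∀ p q, ψ (gw F (w p q)) = 1 := by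
    intro p q
    simp only [w]
    split_ifs
    · exact hψ1
    · rw [gw_cons, gw_nil, mul_one]
      exact hψa
  have h := lower_incidence F
    (grassEnv F (Matrix (Fin (k + ℓ)) (Fin (k + ℓ)) F) (mklGrade F k ℓ) (Fin m))
    (fun p : Fin (k + ℓ) => (p : ℕ) < k)
    (fun p q => Matrix.single p q (1 : F) ⊗ₜ gw F (w p q))
    (fun p q _ => tmul_mem_grassEnv F _ (by
      rw [hw]
      exact single_mem_mklGrade F k ℓ p q))
    (fun s t => ⟨tensFun F (Matrix.entryLinearMap F F s t) ψ, fun p q _ => by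
      rw [tensFun_tmul, hψ, mul_one, Matrix.entryLinearMap_apply, Matrix.single_apply]
      simp only [eq_comm]⟩)
    (fun p q q' r h1 h2 => by
      rw [Algebra.TensorProduct.tmul_mul_tmul]
      split_ifs with h
      · subst h
        rw [Matrix.single_mul_single_same, ← gw_append, mul_one]
        congr 2
        simp only [w]
        by_cases hp : (p : ℕ) < k <;> by_cases hq : (q : ℕ) < k <;> by_cases hr : (r : ℕ) < k <;>
          first
          | simp [hp, hq, hr]; done
          | exact absurd (h1 hq) hp
          | exact absurd (h2 hr) hq
      · rw [Matrix.single_mul_single_of_ne _ _ _ _ h, TensorProduct.zero_tmul])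
    j r hjr
  have hc : (Finset.univ.filter fun p : Fin (k + ℓ) => (p : ℕ) < k).card = k := by
    have : (Finset.univ.filter fun i : Fin (k + ℓ) => (i : ℕ) < k)
        = Finset.univ.map (Fin.castAddEmb ℓ) := by
      ext i
      simp only [Finset.mem_filter, Finset.mem_univ, true_and, Finset.mem_map,
        Fin.castAddEmb_apply]
      exact ⟨fun h => ⟨⟨i, h⟩, Fin.ext rfl⟩, fun ⟨b, hb⟩ => hb ▸ b.2⟩
    rw [this, Finset.card_map, Finset.card_univ, Fintype.card_fin]
  have hc' : (Finset.univ.filter fun p : Fin (k + ℓ) => ¬ (p : ℕ) < k).card = ℓ := by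
    have := Finset.card_filter_add_card_filter_not (s := (Finset.univ : Finset (Fin (k + ℓ))))
      (fun p : Fin (k + ℓ) => (p : ℕ) < k)
    rw [hc, Finset.card_univ, Fintype.card_fin] at this
    omega
  rw [hc, hc', Fintype.card_fin] at h
  exact h

/-- The even matrix units alone provide an incidence system, and no generator is needed. -/
lemma lower_mat_fin [CharZero F] (n m N : ℕ) (hN : 0 < N) :
    N.factorial * (n ^ N) ^ 2 ≤
      cseq F (grassEnv F (Matrix (Fin n) (Fin n) (AddMonoidAlgebra F (ZMod 2)))
          (fun i => matGrade F n (AddMonoidAlgebra.grade F i)) (Fin m)) N *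
        (n ^ 2 * (n ^ 2).ascFactorial N) := by
  obtain ⟨ψ, hψ⟩ := Module.Projective.exists_dual_eq_one F
    (gw_ne_zero F (List.nodup_nil (α := Fin m)))
  let π : Matrix (Fin n) (Fin n) (AddMonoidAlgebra F (ZMod 2)) →ₐ[F] Matrix (Fin n) (Fin n) F :=
    AlgHom.mapMatrix (AddMonoidAlgebra.lift F F (ZMod 2) 1)
  have hπ : ∀ p q, π (Matrix.single p q (AddMonoidAlgebra.single 0 1)) = Matrix.single p q 1 := by
    intro p q
    rw [AlgHom.mapMatrix_apply, Matrix.map_single]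
    simp
  have h := lower_incidence F
    (grassEnv F (Matrix (Fin n) (Fin n) (AddMonoidAlgebra F (ZMod 2)))
          (fun i => matGrade F n (AddMonoidAlgebra.grade F i)) (Fin m))
    (fun _ : Fin n => True)
    (fun p q => Matrix.single p q (AddMonoidAlgebra.single (0 : ZMod 2) (1 : F)) ⊗ₜ gw F [])
    (fun p q _ => tmul_mem_grassEnv F _ (single_mem_matGrade F n p q _))
    (fun s t => ⟨tensFun F (Matrix.entryLinearMap F F s t ∘ₗ π.toLinearMap) ψ, fun p q _ => by
      rw [tensFun_tmul, hψ, mul_one, LinearMap.comp_apply, AlgHom.toLinearMap_apply, hπ,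
        Matrix.entryLinearMap_apply, Matrix.single_apply]
      simp only [eq_comm]⟩)
    (fun p q q' r h1 h2 => by
      rw [Algebra.TensorProduct.tmul_mul_tmul]
      split_ifs with h
      · subst h
        rw [Matrix.single_mul_single_same, ← gw_append, AddMonoidAlgebra.single_mul_single]
        simp
      · rw [Matrix.single_mul_single_of_ne _ _ _ _ h, TensorProduct.zero_tmul])
    N 0 hN
  simpa using h

end LowerBounds

/-! ### Upper bounds -/

section Upper

/-- A linear map with values in `Y` whose kernel consists of identities bounds the codimension
by `dim Y`. -/
lemma cseq_le_finrank {B : Type*} [Ring B] [Algebra F B] (S : Submodule F B) (N : ℕ) {Y : Type*}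
    [AddCommGroup Y] [Module F Y] [Module.Finite F Y] (Φ : (Equiv.Perm (Fin N) → F) →ₗ[F] Y)
    (h : ∀ c, Φ c = 0 → assocEval F S N c = 0) : cseq F S N ≤ Module.finrank F Y := by
  have h1 := LinearMap.finrank_range_add_finrank_ker Φ
  have h2 := LinearMap.finrank_range_add_finrank_ker (assocEval F S N)
  have h3 : Module.finrank F (LinearMap.ker Φ) ≤
      Module.finrank F (LinearMap.ker (assocEval F S N)) :=
    Submodule.finrank_mono fun c hc => h c hc
  have h4 := Submodule.finrank_le (LinearMap.range Φ)
  unfold cseq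
  omega

/-- A multilinear polynomial vanishing on a spanning set vanishes. -/
lemma assocEval_eq_zero {B : Type*} [Ring B] [Algebra F B] (S : Submodule F B) (N : ℕ)
    (T : Set B) (hT : S ≤ Submodule.span F T) (c : Equiv.Perm (Fin N) → F)
    (h : ∀ x : Fin N → B, (∀ i, x i ∈ T) →
      ∑ σ : Equiv.Perm (Fin N), c σ • (List.ofFn fun i => x (σ i)).prod = 0) :
    assocEval F S N c = 0 := by
  classical
  let M : MultilinearMap F (fun _ : Fin N => B) B :=
    ∑ σ : Equiv.Perm (Fin N), c σ • (MultilinearMap.mkPiAlgebraFin F N B).domDomCongr σ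
  have hM : ∀ x, M x = ∑ σ : Equiv.Perm (Fin N), c σ • (List.ofFn fun i => x (σ i)).prod := by
    intro x
    simp [M, MultilinearMap.domDomCongr_apply,
      MultilinearMap.mkPiAlgebraFin_apply]
  have key : ∀ s : Finset (Fin N), ∀ x : Fin N → B, (∀ i ∈ s, x i ∈ Submodule.span F T) →
      (∀ i ∉ s, x i ∈ T) → M x = 0 := by
    intro s
    induction s using Finset.induction_on with
    | empty =>
      intro x _ hx
      rw [hM, h x fun i => hx i (by simp)]
    | insert a s ha ih =>
      intro x hx hx'
      have h1 : Set.EqOn (M.toLinearMap x a) (0 : B →ₗ[F] B) T := by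
        intro b hb
        rw [MultilinearMap.toLinearMap_apply, LinearMap.zero_apply]
        refine ih _ (fun i hi => ?_) fun i hi => ?_
        · rw [Function.update_of_ne (by rintro rfl; exact ha hi)]
          exact hx i (Finset.mem_insert_of_mem hi)
        · by_cases hia : i = a
          · subst hia
            rwa [Function.update_self]
          · rw [Function.update_of_ne hia]
            exact hx' i (by simp [hia, hi])
      have h2 := LinearMap.eqOn_span h1 (hx a (Finset.mem_insert_self _ _))
      rwa [MultilinearMap.toLinearMap_apply, Function.update_eq_self] at h2
  funext x
  have h3 := key Finset.univ (fun i => (x i : B)) (fun i _ => hT (x i).2) (by simp)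
  rw [hM] at h3
  exact h3

lemma tensSub_le {A B : Type*} [Ring A] [Ring B] [Algebra F A] [Algebra F B]
    {p : Submodule F A} {q : Submodule F B} {P : Set A} {Q : Set B} {T : Set (A ⊗[F] B)}
    (hp : p ≤ Submodule.span F P) (hq : q ≤ Submodule.span F Q)
    (hT : ∀ a ∈ P, ∀ b ∈ Q, a ⊗ₜ b ∈ Submodule.span F T) :
    tensSub F p q ≤ Submodule.span F T := by
  rintro _ ⟨z, rfl⟩
  have h1 : Submodule.map₂ (TensorProduct.mk F A B) (Submodule.span F P) (Submodule.span F Q)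
      ≤ Submodule.span F T := by
    rw [Submodule.map₂_span_span, Submodule.span_le]
    rintro _ ⟨a, ha, b, hb, rfl⟩
    exact hT a ha b hb
  induction z using TensorProduct.induction_on with
  | zero => rw [map_zero]; exact Submodule.zero_mem _
  | tmul a b =>
    rw [TensorProduct.map_tmul]
    exact h1 (Submodule.apply_mem_map₂ (TensorProduct.mk F A B) (hp a.2) (hq b.2))
  | add x y hx hy => rw [map_add]; exact Submodule.add_mem _ hx hy

/-- The envelope is spanned by the tensors `h u ⊗ w` with `u` and the word `w` of the same parity. -/
lemma grassEnv_le {A : Type*} [Ring A] [Algebra F A] (𝒜 : ZMod 2 → Submodule F A) {ι : Type*}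
    {U : Type*} (h : U → A) (par : U → ZMod 2)
    (hA : ∀ i, 𝒜 i ≤ Submodule.span F (h '' {u | par u = i})) {T : Set (A ⊗[F] Grass F ι)}
    (hT : ∀ (u : U) (w : List ι), par u = w.length → h u ⊗ₜ gw F w ∈ Submodule.span F T) :
    grassEnv F A 𝒜 ι ≤ Submodule.span F T := by
  have : ∀ i, tensSub F (𝒜 i) (grassPart F ι i) ≤ Submodule.span F T := by
    intro i
    refine tensSub_le F (hA i) (grassPart_le F i) ?_
    rintro _ ⟨u, hu, rfl⟩ _ ⟨w, hw, rfl⟩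
    refine hT u w ?_
    change par u = i at hu
    change (w.length : ZMod 2) = i at hw
    rw [hu, hw]
  exact sup_le (this 0) (this 1)

/-- Reordering the factors `h u ⊗ w` changes the Grassmann part by a sign depending only on the
parities, so the tuples in `U ^ N`, with values in `A`, decide whether a polynomial vanishes. -/
lemma upper_inf {A : Type*} [Ring A] [Algebra F A] [Module.Finite F A]
    (𝒜 : ZMod 2 → Submodule F A) {U : Type*} [Fintype U] (h : U → A) (par : U → ZMod 2)
    (hA : ∀ i, 𝒜 i ≤ Submodule.span F (h '' {u | par u = i})) (ι : Type*) (N : ℕ) :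
    cseq F (grassEnv F A 𝒜 ι) N ≤ Fintype.card U ^ N * Module.finrank F A := by
  classical
  let P : Equiv.Perm (Fin N) → (Fin N → U) → A := fun σ u =>
    chi (qPerm σ fun i => par (u i)) • (List.ofFn fun i => h (u (σ i))).prod
  have hfin : Module.finrank F ((Fin N → U) → A) = Fintype.card U ^ N * Module.finrank F A := by
    rw [Module.finrank_pi_fintype]
    simp
  rw [← hfin]
  refine cseq_le_finrank F _ N (Fintype.linearCombination F P) fun c hc => ?_
  refine assocEval_eq_zero F _ N
    {x | ∃ (u : U) (w : List ι), par u = w.length ∧ x = h u ⊗ₜ gw F w}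
    (grassEnv_le F 𝒜 h par hA fun u w huw => Submodule.subset_span ⟨u, w, huw, rfl⟩) c ?_
  intro x hx
  choose u w huw hx using hx
  have h1 := congrFun hc u
  rw [Fintype.linearCombination_apply, Finset.sum_apply] at h1
  simp only [Pi.smul_apply, Pi.zero_apply, P] at h1
  have h2 : ∀ σ : Equiv.Perm (Fin N), (List.ofFn fun i => x (σ i)).prod
      = (chi (qPerm σ fun i => par (u i)) • (List.ofFn fun i => h (u (σ i))).prod) ⊗ₜ[F]
        (List.ofFn fun i => gw F (w i)).prod := by
    intro σ
    simp only [hx]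
    rw [prod_tmul F (fun i => h (u (σ i))) (fun i => gw F (w (σ i))),
      prod_perm (fun i => par (u i)) (fun i => gw F (w i)) (fun i j => by
        rw [gw_mul_gw, huw, huw]) σ, TensorProduct.tmul_smul, TensorProduct.smul_tmul']
  simp only [h2, TensorProduct.smul_tmul']
  rw [← TensorProduct.sum_tmul, h1, TensorProduct.zero_tmul]

/-- Words with few letters from the second alphabet are counted by giving each such letter the
weight `1 / N`, as `(1 + b / N) ^ N ≤ exp b`. -/
lemma card_few_right {α β : Type*} [Fintype α] [Fintype β] (hα : 0 < Fintype.card α) (m N : ℕ)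
    (hN : 0 < N) :
    (Fintype.card {u : Fin N → α ⊕ β // (Finset.univ.filter fun i => (u i).isRight).card ≤ m} : ℝ)
      ≤ Real.exp (Fintype.card β) * (N : ℝ) ^ m * (Fintype.card α : ℝ) ^ N := by
  classical
  have hN1 : (1 : ℝ) ≤ N := by exact_mod_cast hN
  have hα1 : (1 : ℝ) ≤ Fintype.card α := by exact_mod_cast hα
  let f : α ⊕ β → ℝ := Sum.elim (fun _ => 1) (fun _ => (N : ℝ)⁻¹)
  have hf : ∀ x, 0 ≤ f x := by rintro (x | x) <;> simp [f]
  have hprod : ∀ u : Fin N → α ⊕ β,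
      ∏ i, f (u i) = ((N : ℝ)⁻¹) ^ (Finset.univ.filter fun i => (u i).isRight).card := by
    intro u
    rw [← Finset.prod_const, Finset.prod_filter]
    refine Finset.prod_congr rfl fun i _ => ?_
    rcases u i with x | x <;> simp [f]
  rw [Fintype.card_subtype]
  calc _ = ∑ u ∈ Finset.univ.filter fun u : Fin N → α ⊕ β =>
        (Finset.univ.filter fun i => (u i).isRight).card ≤ m, (1 : ℝ) := by simp
    _ ≤ ∑ u ∈ Finset.univ.filter fun u : Fin N → α ⊕ β =>
        (Finset.univ.filter fun i => (u i).isRight).card ≤ m, (N : ℝ) ^ m * ∏ i, f (u i) := by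
      refine Finset.sum_le_sum fun u hu => ?_
      rw [hprod, inv_pow, ← div_eq_mul_inv, le_div_iff₀ (by positivity), one_mul]
      exact pow_le_pow_right₀ hN1 (Finset.mem_filter.1 hu).2
    _ ≤ ∑ u : Fin N → α ⊕ β, (N : ℝ) ^ m * ∏ i, f (u i) := by
      refine Finset.sum_le_sum_of_subset_of_nonneg (Finset.filter_subset _ _) fun u _ _ => ?_
      exact mul_nonneg (by positivity) (Finset.prod_nonneg fun i _ => hf _)
    _ = (N : ℝ) ^ m * (Fintype.card α + Fintype.card β * (N : ℝ)⁻¹) ^ N := by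
      rw [← Finset.mul_sum, ← Fintype.sum_pow]
      simp [f]
    _ ≤ (N : ℝ) ^ m * (Fintype.card α * Real.exp (Fintype.card β * (N : ℝ)⁻¹)) ^ N := by
      gcongr
      have h1 := Real.add_one_le_exp (Fintype.card β * (N : ℝ)⁻¹)
      have h2 : 0 ≤ (Fintype.card β * (N : ℝ)⁻¹ : ℝ) := by positivity
      nlinarith
    _ = _ := by
      rw [mul_pow, ← Real.exp_nat_mul]
      have : (N : ℝ) * (Fintype.card β * (N : ℝ)⁻¹) = Fintype.card β := by field_simp
      rw [this]
      ring

/-- With `m` generators, at most `m` factors of a nonzero product carry a nonempty word; the others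
are `h u ⊗ 1` with `u` even. -/
lemma upper_fin {A : Type*} [Ring A] [Algebra F A] [Module.Finite F A]
    (𝒜 : ZMod 2 → Submodule F A) {U : Type*} [Fintype U] (h : U → A) (par : U → ZMod 2)
    (hA : ∀ i, 𝒜 i ≤ Submodule.span F (h '' {u | par u = i})) (m : ℕ)
    (d : ℕ) (hd : Fintype.card {u // par u = 0} = d) (hd0 : 0 < d) :
    ∃ C : ℝ, ∀ N : ℕ, 0 < N →
      (cseq F (grassEnv F A 𝒜 (Fin m)) N : ℝ) ≤ C * (N : ℝ) ^ m * (d : ℝ) ^ N := by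
  classical
  let W := {w : List (Fin m) | w.length ≤ m}
  have : Finite W := List.finite_length_le (Fin m) m
  let U0 := {u // par u = 0}
  let U1 := U × {w : W // w.1 ≠ []}
  have := Fintype.ofFinite U1
  let z1 : U0 ⊕ U1 → A := Sum.elim (fun u => h u.1) (fun u => h u.1)
  let z2 : U0 ⊕ U1 → List (Fin m) := Sum.elim (fun _ => []) (fun u => u.2.1.1)
  let z : U0 ⊕ U1 → A ⊗[F] Grass F (Fin m) := fun x => z1 x ⊗ₜ gw F (z2 x)
  refine ⟨Real.exp (Fintype.card U1) * Module.finrank F (A ⊗[F] Grass F (Fin m)), fun N hN => ?_⟩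
  let I := {u : Fin N → U0 ⊕ U1 // (Finset.univ.filter fun i => (u i).isRight).card ≤ m}
  let P : Equiv.Perm (Fin N) → I → A ⊗[F] Grass F (Fin m) := fun σ u =>
    (List.ofFn fun i => z (u.1 (σ i))).prod
  have hfin : Module.finrank F (I → A ⊗[F] Grass F (Fin m))
      = Fintype.card I * Module.finrank F (A ⊗[F] Grass F (Fin m)) := by
    rw [Module.finrank_pi_fintype]
    simp
  have hle : cseq F (grassEnv F A 𝒜 (Fin m)) N
      ≤ Fintype.card I * Module.finrank F (A ⊗[F] Grass F (Fin m)) := by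
    rw [← hfin]
    refine cseq_le_finrank F _ N (Fintype.linearCombination F P) fun c hc => ?_
    refine assocEval_eq_zero F _ N (Set.range z) (grassEnv_le F 𝒜 h par hA fun u w huw => ?_) c ?_
    · by_cases hw : w = []
      · subst hw
        exact Submodule.subset_span ⟨Sum.inl ⟨u, by simpa using huw⟩, rfl⟩
      · by_cases hl : w.length ≤ m
        · exact Submodule.subset_span ⟨Sum.inr ⟨u, ⟨w, hl⟩, hw⟩, rfl⟩
        · rw [gw_eq_zero_of_lt F (not_le.1 hl), TensorProduct.tmul_zero]
          exact Submodule.zero_mem _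
    · intro x hx
      choose u hx using hx
      obtain rfl : (fun i => z (u i)) = x := funext hx
      by_cases hu : (Finset.univ.filter fun i => (u i).isRight).card ≤ m
      · have h1 := congrFun hc ⟨u, hu⟩
        rw [Fintype.linearCombination_apply, Finset.sum_apply] at h1
        exact h1
      · refine Finset.sum_eq_zero fun σ _ => ?_
        have h2 : (List.ofFn fun i => gw F (z2 (u (σ i)))).prod = 0 := by
          have : (List.ofFn fun i => gw F (z2 (u (σ i))))
              = (List.ofFn fun i => z2 (u (σ i))).map (gw F) := by
            rw [List.map_ofFn]; rfl
          rw [this, ← gw_flatten]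
          -- each factor of the second kind contributes at least one generator
          refine gw_eq_zero_of_lt F ((not_le.1 hu).trans_le ?_)
          rw [List.length_flatten, List.map_ofFn, List.sum_ofFn, Finset.card_filter]
          rw [← Equiv.sum_comp σ]
          refine Finset.sum_le_sum fun i _ => ?_
          rw [Function.comp_apply]
          rcases u (σ i) with x | x
          · simp
          · have := x.2.2
            simpa [z2, Nat.one_le_iff_ne_zero] using this
        have h3 := prod_tmul F (fun i => z1 (u (σ i))) (fun i => gw F (z2 (u (σ i))))
        rw [h2, TensorProduct.tmul_zero] at h3
        change c σ • (List.ofFn fun i => z1 (u (σ i)) ⊗ₜ gw F (z2 (u (σ i)))).prod = 0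
        rw [h3, smul_zero]
  have hcard := card_few_right (α := U0) (β := U1) (by rw [hd]; exact hd0) m N hN
  rw [hd] at hcard
  calc (cseq F (grassEnv F A 𝒜 (Fin m)) N : ℝ)
      ≤ Fintype.card I * Module.finrank F (A ⊗[F] Grass F (Fin m)) := by exact_mod_cast hle
    _ ≤ (Real.exp (Fintype.card U1) * (N : ℝ) ^ m * (d : ℝ) ^ N)
        * Module.finrank F (A ⊗[F] Grass F (Fin m)) := by gcongr
    _ = _ := by ring

lemma mklGrade_le (k ℓ : ℕ) (i : ZMod 2) : mklGrade F k ℓ i ≤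
    Submodule.span F ((fun u : Fin (k + ℓ) × Fin (k + ℓ) => Matrix.single u.1 u.2 (1 : F)) ''
      {u | (if ((u.1 : ℕ) < k ↔ (u.2 : ℕ) < k) then (0 : ZMod 2) else 1) = i}) := by
  intro M hM
  rw [Matrix.matrix_eq_sum_single M]
  refine Submodule.sum_mem _ fun p _ => Submodule.sum_mem _ fun q _ => ?_
  by_cases h : (if ((p : ℕ) < k ↔ (q : ℕ) < k) then (0 : ZMod 2) else 1) = i
  · have : Matrix.single p q (M p q) = M p q • Matrix.single p q (1 : F) := by
      rw [Matrix.smul_single, smul_eq_mul, mul_one]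
    rw [this]
    exact Submodule.smul_mem _ _ (Submodule.subset_span ⟨(p, q), h, rfl⟩)
  · rw [hM p q h, Matrix.single_zero]
    exact Submodule.zero_mem _

lemma matGrade_le (n : ℕ) (i : ZMod 2) :
    matGrade F n (AddMonoidAlgebra.grade F i) ≤
    Submodule.span F ((fun u : (Fin n × Fin n) × ZMod 2 =>
      Matrix.single u.1.1 u.1.2 (AddMonoidAlgebra.single u.2 (1 : F))) '' {u | u.2 = i}) := by
  intro M hM
  rw [Matrix.matrix_eq_sum_single M]
  refine Submodule.sum_mem _ fun p _ => Submodule.sum_mem _ fun q _ => ?_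
  obtain ⟨c, hc⟩ := (AddMonoidAlgebra.mem_grade_iff' F i _).1 (hM p q)
  have : Matrix.single p q (M p q)
      = c • Matrix.single p q (AddMonoidAlgebra.single i (1 : F)) := by
    rw [Matrix.smul_single, ← hc]
    simp
  rw [this]
  exact Submodule.smul_mem _ _ (Submodule.subset_span ⟨((p, q), i), rfl, rfl⟩)

lemma card_mkl (k ℓ : ℕ) :
    Fintype.card {u : Fin (k + ℓ) × Fin (k + ℓ) //
      (if ((u.1 : ℕ) < k ↔ (u.2 : ℕ) < k) then (0 : ZMod 2) else 1) = 0} = k ^ 2 + ℓ ^ 2 := by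
  rw [Fintype.card_subtype, Finset.card_filter, Fintype.sum_prod_type, Fin.sum_univ_add]
  simp only [Fin.sum_univ_add]
  simp [sq]

lemma card_mat (n : ℕ) :
    Fintype.card {u : (Fin n × Fin n) × ZMod 2 // u.2 = 0} = n ^ 2 := by
  rw [Fintype.card_subtype, Finset.card_filter, Fintype.sum_prod_type]
  simp [sq]

end Upper

/-! ### Exponential growth rates -/

section Asymptotics

/-- Rising factorials are `N!` up to polynomial factors. -/
lemma ascFactorial_le (a N : ℕ) : a.ascFactorial N ≤ N.factorial * (N + 1) ^ a := by
  induction a with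
  | zero =>
    rcases N with _ | N
    · simp
    · simp [Nat.zero_ascFactorial]
  | succ a ih =>
    rcases Nat.eq_zero_or_pos a with rfl | ha
    · rw [Nat.one_ascFactorial]
      exact Nat.le_mul_of_pos_right _ (by positivity)
    · refine Nat.le_of_mul_le_mul_left ?_ ha
      calc a * (a + 1).ascFactorial N = (a + N) * a.ascFactorial N := Nat.succ_ascFactorial a N
        _ ≤ (a * (N + 1)) * (N.factorial * (N + 1) ^ a) := by
          refine Nat.mul_le_mul ?_ ih
          nlinarith
        _ = _ := by ring

lemma tendsto_root_poly {C : ℝ} (hC : 0 < C) (p : ℕ) :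
    Filter.Tendsto (fun N : ℕ => (C * ((N : ℝ) + 1) ^ p) ^ ((N : ℝ)⁻¹)) Filter.atTop (nhds 1) := by
  have h1 : Filter.Tendsto (fun N : ℕ => C ^ ((N : ℝ)⁻¹)) Filter.atTop (nhds 1) := by
    have h := (tendsto_const_nhds (x := C)).rpow (tendsto_inv_atTop_nhds_zero_nat (𝕜 := ℝ))
      (Or.inl hC.ne')
    rwa [Real.rpow_zero] at h
  have h2 : Filter.Tendsto (fun N : ℕ => ((N : ℝ) + 1) ^ ((p : ℝ) / (1 * ((N : ℝ) + 1) + -1)))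
      Filter.atTop (nhds 1) :=
    (tendsto_rpow_div_mul_add p 1 (-1) zero_ne_one).comp
      (Filter.tendsto_atTop_add_const_right _ 1 tendsto_natCast_atTop_atTop)
  have h3 := h1.mul h2
  rw [one_mul] at h3
  refine h3.congr fun N => ?_
  rw [Real.mul_rpow hC.le (by positivity), ← Real.rpow_natCast, ← Real.rpow_mul (by positivity)]
  congr 2
  rw [div_eq_mul_inv]
  congr 2
  ring

/-- A sequence equal to `d ^ N` up to polynomial factors on both sides has exponential rate `d`. -/
lemma tendsto_root {c : ℕ → ℕ} {d : ℝ} (hd : 0 < d) {C D : ℝ} (hD : 0 < D) (p q : ℕ)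
    (hlow : ∀ N : ℕ, 0 < N → d ^ N ≤ C * ((N : ℝ) + 1) ^ p * c N)
    (hup : ∀ N : ℕ, 0 < N → (c N : ℝ) ≤ D * ((N : ℝ) + 1) ^ q * d ^ N) :
    Filter.Tendsto (fun N => (c N : ℝ) ^ ((N : ℝ)⁻¹)) Filter.atTop (nhds d) := by
  have hC : 0 < C := by
    have h1 := (pow_pos hd 1).trans_le (hlow 1 one_pos)
    by_contra h
    push Not at h
    have : C * (((1 : ℕ) : ℝ) + 1) ^ p * c 1 ≤ 0 :=
      mul_nonpos_of_nonpos_of_nonneg (mul_nonpos_of_nonpos_of_nonneg h (by positivity))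
        (by positivity)
    linarith
  have hroot : ∀ N : ℕ, 0 < N → (d ^ N) ^ ((N : ℝ)⁻¹) = d := fun N hN =>
    Real.pow_rpow_inv_natCast hd.le hN.ne'
  have hl : Filter.Tendsto (fun N : ℕ => d * ((C * ((N : ℝ) + 1) ^ p) ^ ((N : ℝ)⁻¹))⁻¹)
      Filter.atTop (nhds d) := by
    simpa using ((tendsto_root_poly hC p).inv₀ one_ne_zero).const_mul d
  have hu : Filter.Tendsto (fun N : ℕ => (D * ((N : ℝ) + 1) ^ q) ^ ((N : ℝ)⁻¹) * d)
      Filter.atTop (nhds d) := by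
    simpa using (tendsto_root_poly hD q).mul_const d
  refine tendsto_of_tendsto_of_tendsto_of_le_of_le' hl hu ?_ ?_
  · filter_upwards [Filter.eventually_gt_atTop 0] with N hN
    rw [← div_eq_mul_inv, div_le_iff₀ (by positivity), mul_comm,
      ← Real.mul_rpow (by positivity) (by positivity)]
    nth_rewrite 1 [← hroot N hN]
    exact Real.rpow_le_rpow (by positivity) (hlow N hN) (by positivity)
  · filter_upwards [Filter.eventually_gt_atTop 0] with N hN
    nth_rewrite 1 [← hroot N hN]
    rw [← Real.mul_rpow (by positivity) (by positivity)]
    exact Real.rpow_le_rpow (by positivity) (hup N hN) (by positivity)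

end Asymptotics

/-! ### The four limits -/

section Limits

variable [CharZero F]

lemma tendsto_mkl_inf (k ℓ : ℕ) (hk : 0 < k) : Filter.Tendsto
      (fun N => (cseq F (grassEnv F (Matrix (Fin (k + ℓ)) (Fin (k + ℓ)) F)
          (mklGrade F k ℓ) ℕ) N : ℝ) ^ ((N : ℝ)⁻¹))
      Filter.atTop (nhds (((k : ℝ) + ℓ) ^ 2)) := by
  have hd : (0 : ℝ) < ((k : ℝ) + ℓ) ^ 2 := by positivity
  refine tendsto_root hd (C := 1)
    (D := Module.finrank F (Matrix (Fin (k + ℓ)) (Fin (k + ℓ)) F) + 1) (by positivity)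
    ((k + ℓ) ^ 2) 0 (fun N _ => ?_) fun N _ => ?_
  · have h1 : N.factorial * ((k + ℓ) ^ 2 * ((k + ℓ) ^ 2) ^ N)
        ≤ N.factorial * ((k + ℓ) ^ 2 * ((N + 1) ^ ((k + ℓ) ^ 2) *
          cseq F (grassEnv F (Matrix (Fin (k + ℓ)) (Fin (k + ℓ)) F) (mklGrade F k ℓ) ℕ) N)) := by
      calc _ = N.factorial * ((k + ℓ) ^ (N + 1)) ^ 2 := by
            rw [← pow_succ', pow_right_comm]
        _ ≤ _ := lower_mkl_inf F k ℓ N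
        _ ≤ cseq F (grassEnv F (Matrix (Fin (k + ℓ)) (Fin (k + ℓ)) F) (mklGrade F k ℓ) ℕ) N *
          ((k + ℓ) ^ 2 * (N.factorial * (N + 1) ^ ((k + ℓ) ^ 2))) := by
          gcongr
          exact ascFactorial_le _ _
        _ = _ := by ring
    have h2 := Nat.le_of_mul_le_mul_left (Nat.le_of_mul_le_mul_left h1 N.factorial_pos)
      (by positivity)
    rw [one_mul]
    exact_mod_cast h2
  · have h1 := upper_inf F (mklGrade F k ℓ) _ _ (mklGrade_le F k ℓ) ℕ N
    rw [Fintype.card_prod, Fintype.card_fin, ← sq] at h1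
    have h2 : (cseq F (grassEnv F (Matrix (Fin (k + ℓ)) (Fin (k + ℓ)) F) (mklGrade F k ℓ) ℕ) N : ℝ)
        ≤ (((k : ℝ) + ℓ) ^ 2) ^ N * Module.finrank F (Matrix (Fin (k + ℓ)) (Fin (k + ℓ)) F) := by
      exact_mod_cast h1
    have h3 := pow_pos hd N
    rw [pow_zero]
    nlinarith

lemma tendsto_mat_inf (n : ℕ) (hn : 0 < n) : Filter.Tendsto
      (fun N => (cseq F (grassEnv F (Matrix (Fin n) (Fin n) (AddMonoidAlgebra F (ZMod 2)))
          (fun i => matGrade F n (AddMonoidAlgebra.grade F i)) ℕ) N : ℝ) ^ ((N : ℝ)⁻¹))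
      Filter.atTop (nhds (2 * (n : ℝ) ^ 2)) := by
  have hd : (0 : ℝ) < 2 * (n : ℝ) ^ 2 := by positivity
  refine tendsto_root hd (C := 2)
    (D := Module.finrank F (Matrix (Fin n) (Fin n) (AddMonoidAlgebra F (ZMod 2))) + 1)
    (by positivity) (2 * n ^ 2) 0 (fun N _ => ?_) fun N _ => ?_
  · have h1 : (N.factorial * 2 ^ N) * (n ^ 2 * (2 * n ^ 2) ^ N)
        ≤ (N.factorial * 2 ^ N) * (n ^ 2 * (2 * (N + 1) ^ (2 * n ^ 2) *
          cseq F (grassEnv F (Matrix (Fin n) (Fin n) (AddMonoidAlgebra F (ZMod 2)))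
            (fun i => matGrade F n (AddMonoidAlgebra.grade F i)) ℕ) N)) := by
      calc _ = N.factorial * (2 ^ N * n ^ (N + 1)) ^ 2 := by rw [mul_pow 2 (n ^ 2) N]; ring
        _ ≤ _ := lower_mat_inf F n N
        _ ≤ cseq F (grassEnv F (Matrix (Fin n) (Fin n) (AddMonoidAlgebra F (ZMod 2)))
            (fun i => matGrade F n (AddMonoidAlgebra.grade F i)) ℕ) N *
          (2 ^ N * (2 * n ^ 2 * (N.factorial * (N + 1) ^ (2 * n ^ 2)))) := by
          gcongr
          exact ascFactorial_le _ _
        _ = _ := by ring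
    have h2 := Nat.le_of_mul_le_mul_left (Nat.le_of_mul_le_mul_left h1 (by positivity))
      (by positivity)
    exact_mod_cast h2
  · have h1 := upper_inf F (fun i => matGrade F n (AddMonoidAlgebra.grade F i)) _ _
      (matGrade_le F n) ℕ N
    rw [Fintype.card_prod, Fintype.card_prod, Fintype.card_fin, ZMod.card, ← sq, mul_comm _ 2] at h1
    have h2 : (cseq F (grassEnv F (Matrix (Fin n) (Fin n) (AddMonoidAlgebra F (ZMod 2)))
        (fun i => matGrade F n (AddMonoidAlgebra.grade F i)) ℕ) N : ℝ)
        ≤ (2 * (n : ℝ) ^ 2) ^ N *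
          Module.finrank F (Matrix (Fin n) (Fin n) (AddMonoidAlgebra F (ZMod 2))) := by
      exact_mod_cast h1
    have h3 := pow_pos hd N
    rw [pow_zero]
    nlinarith

lemma tendsto_mkl_fin (k ℓ m : ℕ) (hk : 0 < k) (hm : 1 ≤ m) : Filter.Tendsto
      (fun N => (cseq F (grassEnv F (Matrix (Fin (k + ℓ)) (Fin (k + ℓ)) F)
          (mklGrade F k ℓ) (Fin m)) N : ℝ) ^ ((N : ℝ)⁻¹))
      Filter.atTop (nhds ((k : ℝ) ^ 2 + (ℓ : ℝ) ^ 2)) := by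
  have hd : (0 : ℝ) < (k : ℝ) ^ 2 + (ℓ : ℝ) ^ 2 := by positivity
  obtain ⟨D, hD⟩ := upper_fin F (mklGrade F k ℓ) _ _ (mklGrade_le F k ℓ) m _ (card_mkl k ℓ)
    (by positivity)
  refine tendsto_root hd (C := ((k + ℓ) ^ 2 : ℕ)) (D := |D| + 1) (by positivity)
    (k ^ 2 + ℓ ^ 2 + 1) m (fun N hN => ?_) fun N hN => ?_
  · set c := cseq F (grassEnv F (Matrix (Fin (k + ℓ)) (Fin (k + ℓ)) F) (mklGrade F k ℓ) (Fin m)) N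
      with hc
    -- the contribution of the walks with `j` steps in the first block
    have key : ∀ j ∈ Finset.range (N + 1), (k ^ 2) ^ j * (ℓ ^ 2) ^ (N - j) * N.choose j
        ≤ (k + ℓ) ^ 2 * (N + 1) ^ (k ^ 2 + ℓ ^ 2) * c := by
      intro j hj
      have hjN : j ≤ N := Nat.lt_succ_iff.1 (Finset.mem_range.1 hj)
      have h0 := lower_mkl_fin F k ℓ m hm j (N - j) (by omega)
      rw [Nat.add_sub_cancel' hjN, ← hc] at h0
      refine le_of_mul_le_mul_left (a := j.factorial * (N - j).factorial) ?_ (by positivity)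
      calc _ = (N.choose j * j.factorial * (N - j).factorial) * (k ^ j * ℓ ^ (N - j)) ^ 2 := by
            ring
        _ = N.factorial * (k ^ j * ℓ ^ (N - j)) ^ 2 := by
          rw [Nat.choose_mul_factorial_mul_factorial hjN]
        _ ≤ _ := h0
        _ ≤ c * ((k + ℓ) ^ 2 * ((j.factorial * (N + 1) ^ k ^ 2) *
            ((N - j).factorial * (N + 1) ^ ℓ ^ 2))) := by
          gcongr
          · refine (ascFactorial_le _ _).trans ?_
            gcongr
          · refine (ascFactorial_le _ _).trans ?_
            gcongr
            omega
        _ = _ := by rw [pow_add (N + 1)]; ring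
    have h1 : (k ^ 2 + ℓ ^ 2) ^ N ≤ (k + ℓ) ^ 2 * (N + 1) ^ (k ^ 2 + ℓ ^ 2 + 1) * c := by
      rw [add_pow]
      refine (Finset.sum_le_card_nsmul _ _ _ key).trans (le_of_eq ?_)
      rw [Finset.card_range, smul_eq_mul]
      ring
    exact_mod_cast h1
  · refine (hD N hN).trans ?_
    push_cast
    gcongr
    · exact (le_abs_self D).trans (by linarith)
    · linarith

lemma tendsto_mat_fin (n m : ℕ) (hn : 0 < n) : Filter.Tendsto
      (fun N => (cseq F (grassEnv F (Matrix (Fin n) (Fin n) (AddMonoidAlgebra F (ZMod 2)))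
          (fun i => matGrade F n (AddMonoidAlgebra.grade F i)) (Fin m)) N : ℝ) ^ ((N : ℝ)⁻¹))
      Filter.atTop (nhds ((n : ℝ) ^ 2)) := by
  have hd : (0 : ℝ) < (n : ℝ) ^ 2 := by positivity
  obtain ⟨D, hD⟩ := upper_fin F (fun i => matGrade F n (AddMonoidAlgebra.grade F i)) _ _
    (matGrade_le F n) m _ (card_mat n) (by positivity)
  refine tendsto_root hd (C := (n ^ 2 : ℕ)) (D := |D| + 1) (by positivity) (n ^ 2) m
    (fun N hN => ?_) fun N hN => ?_
  · set c := cseq F (grassEnv F (Matrix (Fin n) (Fin n) (AddMonoidAlgebra F (ZMod 2)))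
          (fun i => matGrade F n (AddMonoidAlgebra.grade F i)) (Fin m)) N with hc
    have h0 := lower_mat_fin F n m N hN
    rw [← hc] at h0
    have h1 : N.factorial * (n ^ 2) ^ N ≤ N.factorial * (n ^ 2 * (N + 1) ^ n ^ 2 * c) := by
      calc _ = N.factorial * (n ^ N) ^ 2 := by ring
        _ ≤ _ := h0
        _ ≤ c * (n ^ 2 * (N.factorial * (N + 1) ^ n ^ 2)) := by
          gcongr
          exact ascFactorial_le _ _
        _ = _ := by ring
    exact_mod_cast Nat.le_of_mul_le_mul_left h1 N.factorial_pos
  · refine (hD N hN).trans ?_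
    push_cast
    gcongr
    · exact (le_abs_self D).trans (by linarith)
    · linarith

end Limits

/-- PI-exponents (`exp(B) = lim c_N(B)^{1/N}`) of Grassmann envelopes:
`exp(G(M_{k,ℓ})) = (k+ℓ)²`, `exp(G(M_n(FZ₂))) = 2n²`, while for every finite `m ≥ 1`,
`exp(G_m(M_{k,ℓ})) = k² + ℓ²` and `exp(G_m(M_n(FZ₂))) = n²`. -/
theorem exp_grassEnv [IsAlgClosed F] [CharZero F]
    (k ℓ n m : ℕ) (hk : 0 < k) (hn : 0 < n) (hm : 1 ≤ m) :
    Filter.Tendsto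
      (fun N => (cseq F (grassEnv F (Matrix (Fin (k + ℓ)) (Fin (k + ℓ)) F)
          (mklGrade F k ℓ) ℕ) N : ℝ) ^ ((N : ℝ)⁻¹))
      Filter.atTop (nhds (((k : ℝ) + ℓ) ^ 2)) ∧
    Filter.Tendsto
      (fun N => (cseq F (grassEnv F (Matrix (Fin n) (Fin n) (AddMonoidAlgebra F (ZMod 2)))
          (fun i => matGrade F n (AddMonoidAlgebra.grade F i)) ℕ) N : ℝ) ^ ((N : ℝ)⁻¹))
      Filter.atTop (nhds (2 * (n : ℝ) ^ 2)) ∧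
    Filter.Tendsto
      (fun N => (cseq F (grassEnv F (Matrix (Fin (k + ℓ)) (Fin (k + ℓ)) F)
          (mklGrade F k ℓ) (Fin m)) N : ℝ) ^ ((N : ℝ)⁻¹))
      Filter.atTop (nhds ((k : ℝ) ^ 2 + (ℓ : ℝ) ^ 2)) ∧
    Filter.Tendsto
      (fun N => (cseq F (grassEnv F (Matrix (Fin n) (Fin n) (AddMonoidAlgebra F (ZMod 2)))
          (fun i => matGrade F n (AddMonoidAlgebra.grade F i)) (Fin m)) N : ℝ) ^ ((N : ℝ)⁻¹))
      Filter.atTop (nhds ((n : ℝ) ^ 2)) := by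
  exact ⟨tendsto_mkl_inf F k ℓ hk, tendsto_mat_inf F n hn, tendsto_mkl_fin F k ℓ m hk hm,
    tendsto_mat_fin F n m hn⟩
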